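/- Over unordered unranked Σ-trees, the ≺_ns-invariant Boolean queries (those definable by an MSO sentence over ordered trees whose truth value does not depend on the choice of sibling ordering) are precisely the Boolean queries definable in MSO_mod, the extension of MSO with modulo quantifiers. -/

import Mathlib

/-!
From `MSOmod` to `MSO`: the sibling order makes the lexicographic order of the nodes definable, and
along it `MSO` can count the elements of a set modulo `k` by guessing a coloring with the residues.
Isomorphisms of unordered trees preserve `MSOmod`, so the resulting sentence is invariant.

Conversely, an `MSO` sentence over ordered trees is equivalent to a finite deterministic bottom-up
automaton. A subtree acts on such an automaton as a function from the state of its right siblings to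
the state reached after reading the subtree as well, and there are only finitely many functions. By
invariance we may sort the children of every node by these functions before running the automaton.
The state below a node is then `f₁^[n₁] (f₂^[n₂] (⋯ (fₘ^[nₘ] q)))`, where `nᵢ` is the number of
children whose subtree acts as `fᵢ`. Since `n ↦ f^[n] q` is eventually periodic on a finite set,
this state depends only on finitely many threshold and modulo conditions on the `nᵢ`, so `MSOmod`
can guess the function of every node and verify the guess.
-/

namespace UnrankedTrees

/-! ### Unranked trees: tree domains and ordered unranked Σ-trees.
Nodes are finite strings over ℕ; a tree domain is a finite prefix-closed set
of nodes such that `s ++ [i] ∈ D` implies `s ++ [j] ∈ D` for all `j < i`. -/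

abbrev Node : Type := List ℕ

/-- An ordered unranked tree over alphabet `A`: a tree domain with a labeling. -/
structure UTree (A : Type) where
  dom : Finset Node
  nil_mem : ([] : Node) ∈ dom
  prefix_closed : ∀ ⦃s t : Node⦄, s ∈ dom → t <+: s → t ∈ dom
  sib_closed : ∀ ⦃s : Node⦄ ⦃i j : ℕ⦄, s ++ [i] ∈ dom → j < i → s ++ [j] ∈ dom
  label : Node → A

namespace UTree

variable {A : Type}

/-- The child relation `≺_ch`. -/
def childR (T : UTree A) (s t : Node) : Prop :=
  s ∈ T.dom ∧ t ∈ T.dom ∧ ∃ i : ℕ, t = s ++ [i]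

/-- The descendant-or-self relation `≺*_ch` (the prefix relation). -/
def descR (T : UTree A) (s t : Node) : Prop :=
  s ∈ T.dom ∧ t ∈ T.dom ∧ s <+: t

/-- The next-sibling relation `≺_ns`. -/
def nsR (T : UTree A) (s t : Node) : Prop :=
  s ∈ T.dom ∧ t ∈ T.dom ∧ ∃ (u : Node) (i : ℕ), s = u ++ [i] ∧ t = u ++ [i + 1]

/-- The sibling ordering `≺*_ns` (reflexive-transitive closure of next-sibling). -/
def sibR (T : UTree A) (s t : Node) : Prop :=
  s ∈ T.dom ∧ t ∈ T.dom ∧ ∃ (u : Node) (i j : ℕ), s = u ++ [i] ∧ t = u ++ [j] ∧ i ≤ j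

/-- The first-child relation `≺_fc`. -/
def firstChildR (T : UTree A) (s t : Node) : Prop :=
  s ∈ T.dom ∧ t ∈ T.dom ∧ t = s ++ [0]

/-- The number of children of a node. -/
noncomputable def childCount (T : UTree A) (s : Node) : ℕ :=
  Set.ncard {i : ℕ | s ++ [i] ∈ T.dom}

/-- The list of children of a node `s`, in sibling order: `s·0, …, s·(n-1)`. -/
noncomputable def childrenList (T : UTree A) (s : Node) : List Node :=
  (List.range (T.childCount s)).map fun i => s ++ [i]

/-- `s` is a leaf of `T`. -/
def isLeaf (T : UTree A) (s : Node) : Prop :=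
  s ∈ T.dom ∧ ∀ i : ℕ, s ++ [i] ∉ T.dom

/-- `s` has no next sibling in `T` (the root also counts as "last"). -/
def isLast (T : UTree A) (s : Node) : Prop :=
  s = [] ∨ ∃ (u : Node) (i : ℕ), s = u ++ [i] ∧ u ++ [i + 1] ∉ T.dom

end UTree

/-! ### MSO over ordered unranked trees.
First-order variables and monadic second-order variables are indexed by ℕ.
First-order quantifiers range over the nodes of the tree, set quantifiers over
sets of nodes of the tree. -/

inductive MSO (A : Type) : Type where
  | eq : ℕ → ℕ → MSO A
  | desc : ℕ → ℕ → MSO A               -- x ≺*_ch y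
  | sib : ℕ → ℕ → MSO A                -- x ≺*_ns y
  | lab : A → ℕ → MSO A                -- P_a(x)
  | mem : ℕ → ℕ → MSO A                -- X(x)
  | not : MSO A → MSO A
  | and : MSO A → MSO A → MSO A
  | exFO : ℕ → MSO A → MSO A
  | exSO : ℕ → MSO A → MSO A

namespace MSO

variable {A : Type}

def Sat (T : UTree A) (v : ℕ → Node) (V : ℕ → Set Node) : MSO A → Prop
  | .eq x y => v x = v y
  | .desc x y => T.descR (v x) (v y)
  | .sib x y => T.sibR (v x) (v y)
  | .lab a x => v x ∈ T.dom ∧ T.label (v x) = a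
  | .mem X x => v x ∈ V X
  | .not φ => ¬ Sat T v V φ
  | .and φ ψ => Sat T v V φ ∧ Sat T v V ψ
  | .exFO n φ => ∃ s ∈ T.dom, Sat T (Function.update v n s) V φ
  | .exSO n φ => ∃ S : Set Node, S ⊆ ↑T.dom ∧ Sat T v (Function.update V n S) φ

/-- `φ`, as a sentence, defines the set `L` of trees.  (Quantifying over all
valuations forces the truth value to be independent of the valuation, i.e.
`φ` behaves as a sentence.) -/
def DefinesB (φ : MSO A) (L : Set (UTree A)) : Prop :=
  ∀ (T : UTree A) (v : ℕ → Node) (V : ℕ → Set Node), T ∈ L ↔ Sat T v V φ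

/-- `φ`, as a formula whose only free variable is the first-order variable `0`,
defines the unary query `Q`. -/
def DefinesU (φ : MSO A) (Q : UTree A → Set Node) : Prop :=
  ∀ (T : UTree A) (v : ℕ → Node) (V : ℕ → Set Node) (s : Node), s ∈ T.dom →
    (s ∈ Q T ↔ Sat T (Function.update v 0 s) V φ)

end MSO

/-! ### Isomorphism of the underlying unordered trees: a label- and
child-preserving bijection between the domains. Two ordered trees related by
`UIso` are exactly two sibling-ordering expansions of one unordered tree. -/

def UIso {A : Type} (T T' : UTree A) : Prop :=
  ∃ f : Node → Node, Set.BijOn f ↑T.dom ↑T'.dom ∧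
    (∀ s ∈ T.dom, T'.label (f s) = T.label s) ∧
    (∀ s ∈ T.dom, ∀ t ∈ T.dom, (T.childR s t ↔ T'.childR (f s) (f t)))

/-- An MSO sentence (over the ordered vocabulary, including the sibling
order) is `≺_ns`-invariant if its truth value does not depend on the choice
of the sibling ordering. -/
def NsInvariant {A : Type} (φ : MSO A) : Prop :=
  ∀ (T T' : UTree A), UIso T T' →
    ∀ (v v' : ℕ → Node) (V V' : ℕ → Set Node),
      (MSO.Sat T v V φ ↔ MSO.Sat T' v' V' φ)

/-! ### MSO_mod : MSO over unordered trees with modulo quantifiers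
`Q_k(X)` (k > 1), true iff |X| ≡ 0 (mod k). -/

inductive MSOmod (A : Type) : Type where
  | eq : ℕ → ℕ → MSOmod A
  | desc : ℕ → ℕ → MSOmod A
  | lab : A → ℕ → MSOmod A
  | mem : ℕ → ℕ → MSOmod A
  | modq : ℕ → ℕ → MSOmod A   -- `modq k X` is Q_{k+2}(X): |X| ≡ 0 (mod k+2)
  | not : MSOmod A → MSOmod A
  | and : MSOmod A → MSOmod A → MSOmod A
  | exFO : ℕ → MSOmod A → MSOmod A
  | exSO : ℕ → MSOmod A → MSOmod A

namespace MSOmod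

variable {A : Type}

def Sat (T : UTree A) (v : ℕ → Node) (V : ℕ → Set Node) : MSOmod A → Prop
  | .eq x y => v x = v y
  | .desc x y => T.descR (v x) (v y)
  | .lab a x => v x ∈ T.dom ∧ T.label (v x) = a
  | .mem X x => v x ∈ V X
  | .modq k X => (V X).ncard % (k + 2) = 0
  | .not φ => ¬ Sat T v V φ
  | .and φ ψ => Sat T v V φ ∧ Sat T v V ψ
  | .exFO n φ => ∃ s ∈ T.dom, Sat T (Function.update v n s) V φ
  | .exSO n φ => ∃ S : Set Node, S ⊆ ↑T.dom ∧ Sat T v (Function.update V n S) φ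

def DefinesB (φ : MSOmod A) (L : Set (UTree A)) : Prop :=
  ∀ (T : UTree A) (v : ℕ → Node) (V : ℕ → Set Node), T ∈ L ↔ Sat T v V φ

end MSOmod

/-! ### Definability -/

/-- A property of a tree with a valuation of the first-order and of the set variables. -/
abbrev ValProp (A : Type) : Type :=
  UTree A → (ℕ → Node) → (ℕ → Set Node) → Prop

/-- A monadic second-order logic on unordered trees; its formulas form the type `F`. Closure
properties of definability that `MSO` and `MSOmod` share are proved for this class. -/
class TreeLogic (A : outParam Type) (F : Type) where
  Sat : UTree A → (ℕ → Node) → (ℕ → Set Node) → F → Prop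
  eq : ℕ → ℕ → F
  desc : ℕ → ℕ → F
  lab : A → ℕ → F
  mem : ℕ → ℕ → F
  not : F → F
  and : F → F → F
  exFO : ℕ → F → F
  exSO : ℕ → F → F
  sat_eq {T v V} (x y : ℕ) : Sat T v V (eq x y) ↔ v x = v y
  sat_desc {T v V} (x y : ℕ) : Sat T v V (desc x y) ↔ T.descR (v x) (v y)
  sat_lab {T v V} (a : A) (x : ℕ) : Sat T v V (lab a x) ↔ v x ∈ T.dom ∧ T.label (v x) = a
  sat_mem {T v V} (X x : ℕ) : Sat T v V (mem X x) ↔ v x ∈ V X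
  sat_not {T v V} (φ : F) : Sat T v V (not φ) ↔ ¬ Sat T v V φ
  sat_and {T v V} (φ ψ : F) : Sat T v V (and φ ψ) ↔ Sat T v V φ ∧ Sat T v V ψ
  sat_exFO {T v V} (n : ℕ) (φ : F) :
    Sat T v V (exFO n φ) ↔ ∃ s ∈ T.dom, Sat T (Function.update v n s) V φ
  sat_exSO {T v V} (n : ℕ) (φ : F) :
    Sat T v V (exSO n φ) ↔ ∃ S : Set Node, S ⊆ ↑T.dom ∧ Sat T v (Function.update V n S) φ

instance {A : Type} : TreeLogic A (MSO A) where
  Sat := MSO.Sat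
  eq := .eq
  desc := .desc
  lab := .lab
  mem := .mem
  not := .not
  and := .and
  exFO := .exFO
  exSO := .exSO
  sat_eq _ _ := Iff.rfl
  sat_desc _ _ := Iff.rfl
  sat_lab _ _ := Iff.rfl
  sat_mem _ _ := Iff.rfl
  sat_not _ := Iff.rfl
  sat_and _ _ := Iff.rfl
  sat_exFO _ _ := Iff.rfl
  sat_exSO _ _ := Iff.rfl

instance {A : Type} : TreeLogic A (MSOmod A) where
  Sat := MSOmod.Sat
  eq := .eq
  desc := .desc
  lab := .lab
  mem := .mem
  not := .not
  and := .and
  exFO := .exFO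
  exSO := .exSO
  sat_eq _ _ := Iff.rfl
  sat_desc _ _ := Iff.rfl
  sat_lab _ _ := Iff.rfl
  sat_mem _ _ := Iff.rfl
  sat_not _ := Iff.rfl
  sat_and _ _ := Iff.rfl
  sat_exFO _ _ := Iff.rfl
  sat_exSO _ _ := Iff.rfl

/-- The first `N` variables of either sort are interpreted inside the tree. -/
def Admissible {A : Type} (N : ℕ) (T : UTree A) (v : ℕ → Node) (V : ℕ → Set Node) : Prop :=
  (∀ i < N, v i ∈ T.dom) ∧ ∀ i < N, V i ⊆ T.dom

/-- `P` is expressed by a formula of `F`. Only valuations that are admissible up to some bound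
count, because quantifiers range over the tree. -/
def Definable {A : Type} (F : Type) [TreeLogic A F] (P : ValProp A) : Prop :=
  ∃ (φ : F) (N : ℕ), ∀ T v V, Admissible N T v V → (P T v V ↔ TreeLogic.Sat T v V φ)

namespace Admissible

variable {A : Type} {N M n : ℕ} {T : UTree A} {v : ℕ → Node} {V : ℕ → Set Node}

theorem mono (h : Admissible N T v V) (hMN : M ≤ N) : Admissible M T v V :=
  ⟨fun i hi => h.1 i (hi.trans_le hMN), fun i hi => h.2 i (hi.trans_le hMN)⟩

theorem update_fo {s : Node} (h : Admissible N T v V) (hs : s ∈ T.dom) :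
    Admissible N T (Function.update v n s) V := by
  refine ⟨fun i hi => ?_, h.2⟩
  obtain rfl | hin := eq_or_ne i n
  · simpa using hs
  · simpa [hin] using h.1 i hi

theorem update_so {S : Set Node} (h : Admissible N T v V) (hS : S ⊆ T.dom) :
    Admissible N T v (Function.update V n S) := by
  refine ⟨h.1, fun i hi => ?_⟩
  obtain rfl | hin := eq_or_ne i n
  · simpa using hS
  · simpa [hin] using h.2 i hi

end Admissible

namespace Definable

variable {A F : Type} [TreeLogic A F] {P P' : ValProp A}

theorem congr (N : ℕ) (h : Definable F P)
    (hPP' : ∀ T v V, Admissible N T v V → (P T v V ↔ P' T v V)) : Definable F P' := by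
  obtain ⟨φ, M, hφ⟩ := h
  exact ⟨φ, max N M, fun T v V hv => (hPP' T v V (hv.mono (le_max_left _ _))).symm.trans
    (hφ T v V (hv.mono (le_max_right _ _)))⟩

theorem of_iff (h : Definable F P) (hPP' : ∀ T v V, P T v V ↔ P' T v V) : Definable F P' :=
  h.congr 0 fun T v V _ => hPP' T v V

theorem eq (x y : ℕ) : Definable F fun (_ : UTree A) v _ => v x = v y :=
  ⟨TreeLogic.eq x y, 0, fun _ _ _ _ => (TreeLogic.sat_eq x y).symm⟩

theorem desc (x y : ℕ) : Definable F fun (T : UTree A) v _ => T.descR (v x) (v y) :=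
  ⟨TreeLogic.desc x y, 0, fun _ _ _ _ => (TreeLogic.sat_desc x y).symm⟩

theorem lab (a : A) (x : ℕ) : Definable F fun T v _ => T.label (v x) = a :=
  ⟨TreeLogic.lab a x, x + 1, fun _ _ _ hv =>
    ((TreeLogic.sat_lab a x).trans (and_iff_right (hv.1 x x.lt_succ_self))).symm⟩

theorem mem (X x : ℕ) : Definable F fun (_ : UTree A) v V => v x ∈ V X :=
  ⟨TreeLogic.mem X x, 0, fun _ _ _ _ => (TreeLogic.sat_mem X x).symm⟩

theorem not (h : Definable F P) : Definable F fun T v V => ¬ P T v V := by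
  obtain ⟨φ, N, hφ⟩ := h
  exact ⟨TreeLogic.not φ, N, fun T v V hv =>
    (not_congr (hφ T v V hv)).trans (TreeLogic.sat_not φ).symm⟩

theorem and (h : Definable F P) (h' : Definable F P') :
    Definable F fun T v V => P T v V ∧ P' T v V := by
  obtain ⟨φ, N, hφ⟩ := h
  obtain ⟨ψ, M, hψ⟩ := h'
  exact ⟨TreeLogic.and φ ψ, max N M, fun T v V hv =>
    (and_congr (hφ T v V (hv.mono (le_max_left _ _)))
      (hψ T v V (hv.mono (le_max_right _ _)))).trans (TreeLogic.sat_and φ ψ).symm⟩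

theorem exFO (n : ℕ) (h : Definable F P) :
    Definable F fun T v V => ∃ s ∈ T.dom, P T (Function.update v n s) V := by
  obtain ⟨φ, N, hφ⟩ := h
  refine ⟨TreeLogic.exFO n φ, N, fun T v V hv => Iff.trans ?_ (TreeLogic.sat_exFO n φ).symm⟩
  exact exists_congr fun s => and_congr_right fun hs => hφ T _ V (hv.update_fo hs)

theorem exSO (n : ℕ) (h : Definable F P) :
    Definable F fun T v V => ∃ S : Set Node, S ⊆ T.dom ∧ P T v (Function.update V n S) := by
  obtain ⟨φ, N, hφ⟩ := h
  refine ⟨TreeLogic.exSO n φ, N, fun T v V hv => Iff.trans ?_ (TreeLogic.sat_exSO n φ).symm⟩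
  exact exists_congr fun S => and_congr_right fun hS => hφ T v _ (hv.update_so hS)

theorem or (h : Definable F P) (h' : Definable F P') :
    Definable F fun T v V => P T v V ∨ P' T v V :=
  (h.not.and h'.not).not.of_iff fun _ _ _ => by tauto

theorem imp (h : Definable F P) (h' : Definable F P') :
    Definable F fun T v V => P T v V → P' T v V :=
  (h.and h'.not).not.of_iff fun _ _ _ => by tauto

theorem iff (h : Definable F P) (h' : Definable F P') :
    Definable F fun T v V => P T v V ↔ P' T v V :=
  ((h.imp h').and (h'.imp h)).of_iff fun _ _ _ => iff_def.symm

variable (F) in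
theorem const (p : Prop) : Definable F fun (_ : UTree A) _ _ => p := by
  by_cases hp : p
  · exact (eq 0 0).of_iff fun _ _ _ => iff_of_true rfl hp
  · exact (eq 0 0).not.of_iff fun _ _ _ => iff_of_false (not_not_intro rfl) hp

theorem allFO (n : ℕ) (h : Definable F P) :
    Definable F fun T v V => ∀ s ∈ T.dom, P T (Function.update v n s) V :=
  (h.not.exFO n).not.of_iff fun _ _ _ => by push Not; rfl

theorem forall_finite {ι : Type*} [Finite ι] {P : ι → ValProp A} (h : ∀ i, Definable F (P i)) :
    Definable F fun T v V => ∀ i, P i T v V := by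
  choose φ N hφ using h
  cases nonempty_fintype ι
  suffices ∀ I : Finset ι, Definable F fun T v V => ∀ i ∈ I, P i T v V from
    (this Finset.univ).of_iff fun _ _ _ => by simp
  intro I
  induction I using Finset.cons_induction with
  | empty => exact (const F True).of_iff fun _ _ _ => by simp
  | cons i I _ ih =>
    exact (Definable.and ⟨φ i, N i, hφ i⟩ ih).of_iff fun _ _ _ => by simp

theorem exists_finite {ι : Type*} [Finite ι] {P : ι → ValProp A} (h : ∀ i, Definable F (P i)) :
    Definable F fun T v V => ∃ i, P i T v V :=
  (forall_finite fun i => (h i).not).not.of_iff fun _ _ _ => by push Not; rfl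

theorem exSets (I : Finset ℕ) (h : Definable F P) :
    Definable F fun T v V => ∃ W : ℕ → Set Node,
      (∀ i ∈ I, W i ⊆ T.dom) ∧ (∀ i ∉ I, W i = V i) ∧ P T v W := by
  induction I using Finset.induction_on with
  | empty =>
    refine h.of_iff fun T v V => ⟨fun hP => ⟨V, by simpa using hP⟩, ?_⟩
    rintro ⟨W, -, hW, hP⟩
    rwa [← funext fun i => hW i (Finset.notMem_empty i)]
  | insert n I hn ih =>
    refine (ih.exSO n).of_iff fun T v V => ⟨?_, ?_⟩
    · rintro ⟨S, hS, W, hWI, hW, hP⟩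
      have hWn : W n = S := by simpa using hW n hn
      refine ⟨W, ?_, fun i hi => ?_, hP⟩
      · simpa [hWn, hS] using hWI
      · rw [Finset.mem_insert, not_or] at hi
        simpa [hi.1] using hW i hi.2
    · rintro ⟨W, hWI, hW, hP⟩
      rw [Finset.forall_mem_insert] at hWI
      refine ⟨W n, hWI.1, W, hWI.2, fun i hi => ?_, hP⟩
      obtain rfl | hin := eq_or_ne i n
      · simp
      · simpa [hin] using hW i (by simp [hin, hi])

theorem exists_coloring {κ : Type} [Finite κ] (e : κ ↪ ℕ) (h : Definable F P) :
    Definable F fun T v V => ∃ K : Node → κ,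
      P T v (Function.extend e (fun k => {x | x ∈ T.dom ∧ K x = k}) V) := by
  cases nonempty_fintype κ
  have hcover : Definable F fun (T : UTree A) _ V => ∀ x ∈ T.dom, ∃ k, x ∈ V (e k) :=
    ((exists_finite fun k => mem (e k) 0).allFO 0).of_iff fun _ _ _ => by simp
  have hdisj : Definable F fun (T : UTree A) _ V =>
      ∀ x ∈ T.dom, ∀ k l, x ∈ V (e k) → x ∈ V (e l) → k = l :=
    ((forall_finite fun k => forall_finite fun l =>
      (mem (e k) 0).imp ((mem (e l) 0).imp (const F (k = l)))).allFO 0).of_iff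
        fun _ _ _ => by simp
  refine ((hcover.and (hdisj.and h)).exSets (Finset.univ.map e)).of_iff fun T v V => ⟨?_, ?_⟩
  · rintro ⟨W, hWe, hW, hcov, hdis, hP⟩
    have : Nonempty κ := (hcov [] T.nil_mem).nonempty
    choose! K hK using hcov
    refine ⟨K, ?_⟩
    convert hP using 1
    funext i
    by_cases hi : ∃ k, e k = i
    · obtain ⟨k, rfl⟩ := hi
      rw [e.injective.extend_apply]
      ext x
      refine ⟨fun ⟨hx, hk⟩ => hk ▸ hK x hx, fun hx => ?_⟩
      have hxT : x ∈ T.dom := hWe (e k) (by simp) hx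
      exact ⟨hxT, hdis x hxT _ _ (hK x hxT) hx⟩
    · rw [Function.extend_apply' _ _ _ hi, hW i (by simpa using hi)]
  · rintro ⟨K, hP⟩
    refine ⟨_, ?_, fun i hi => ?_, ?_, ?_, hP⟩
    · simp only [Finset.mem_map, Finset.mem_univ, true_and, forall_exists_index,
        forall_apply_eq_imp_iff, e.injective.extend_apply]
      exact fun k x hx => hx.1
    · exact Function.extend_apply' _ _ _ (by simpa using hi)
    · exact fun x hx => ⟨K x, by simp [e.injective.extend_apply, hx]⟩
    · simp only [e.injective.extend_apply]
      exact fun x _ k l hk hl => hk.2.symm.trans hl.2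

theorem exists_sentence {L : Set (UTree A)} (h : Definable F fun T _ _ => T ∈ L) :
    ∃ φ : F, ∀ T v V, T ∈ L ↔ TreeLogic.Sat T v V φ := by
  obtain ⟨φ, N, hφ⟩ := h
  induction N generalizing φ with
  | zero => exact ⟨φ, fun T v V => hφ T v V (by simp [Admissible])⟩
  | succ N ih =>
    refine ih (TreeLogic.exFO N (TreeLogic.exSO N φ)) fun T v V hv => ?_
    have hclosed : ∀ s ∈ T.dom, ∀ S : Set Node, S ⊆ T.dom →
        (T ∈ L ↔ TreeLogic.Sat T (Function.update v N s) (Function.update V N S) φ) := by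
      refine fun s hs S hS => hφ T _ _ ⟨fun i hi => ?_, fun i hi => ?_⟩
      all_goals obtain rfl | hiN := eq_or_ne i N
      · simpa using hs
      · simpa [hiN] using hv.1 i (by omega)
      · simpa using hS
      · simpa [hiN] using hv.2 i (by omega)
    simp only [TreeLogic.sat_exFO, TreeLogic.sat_exSO]
    refine ⟨fun hT => ⟨[], T.nil_mem, ∅, Set.empty_subset _,
      (hclosed _ T.nil_mem _ (Set.empty_subset _)).1 hT⟩, ?_⟩
    rintro ⟨s, hs, S, hS, hsat⟩
    exact (hclosed s hs S hS).2 hsat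

end Definable

/-! ### From `MSOmod` to invariant `MSO` -/

theorem Definable.sib {A : Type} (x y : ℕ) :
    Definable (MSO A) fun T v _ => T.sibR (v x) (v y) :=
  ⟨.sib x y, 0, fun _ _ _ _ => Iff.rfl⟩

theorem Definable.forall_mem {A F : Type} [TreeLogic A F] {P : ValProp A} (n X : ℕ)
    (h : Definable F P) :
    Definable F fun T v V => ∀ s ∈ V X, P T (Function.update v n s) V :=
  (((mem X n).imp h).allFO n).congr (X + 1) fun T v V hv => by
    simpa using ⟨fun hP s hs => hP s (hv.2 X X.lt_succ_self hs) hs, fun hP s _ hs => hP s hs⟩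

theorem node_lt_iff (x y : Node) : x < y ↔
    (x <+: y ∧ x ≠ y) ∨ ∃ (u : Node) (i j : ℕ), i < j ∧ u ++ [i] <+: x ∧ u ++ [j] <+: y := by
  induction x generalizing y with
  | nil => cases y <;> simp
  | cons a x ih =>
    obtain _ | ⟨b, y⟩ := y
    · simp
    rw [List.cons_lt_cons_iff, ih]
    constructor
    · rintro (h | ⟨rfl, ⟨h, h'⟩ | ⟨u, i, j, hij, hx, hy⟩⟩)
      · exact Or.inr ⟨[], a, b, h, by simp, by simp⟩
      · exact Or.inl ⟨by simpa using h, by simpa using h'⟩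
      · exact Or.inr ⟨a :: u, i, j, hij, by simpa using hx, by simpa using hy⟩
    · rintro (⟨h, h'⟩ | ⟨_ | ⟨c, u⟩, i, j, hij, hx, hy⟩)
      · obtain ⟨rfl, hxy⟩ := List.cons_prefix_cons.1 h
        exact Or.inr ⟨rfl, Or.inl ⟨hxy, by simpa using h'⟩⟩
      · simp only [List.nil_append, List.cons_prefix_cons] at hx hy
        exact Or.inl (by omega)
      · simp only [List.cons_append, List.cons_prefix_cons] at hx hy
        exact Or.inr ⟨hx.1.symm.trans hy.1, Or.inr ⟨u, i, j, hij, hx.2, hy.2⟩⟩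

theorem Definable.lt {A : Type} (x y : ℕ) : Definable (MSO A) fun _ v _ => v x < v y := by
  have hfork := (((sib (A := A) (x + y + 1) (x + y + 2)).and
    (eq (x + y + 1) (x + y + 2)).not).and
      ((desc (x + y + 1) x).and (desc (x + y + 2) y))).exFO (x + y + 2) |>.exFO (x + y + 1)
  refine (((desc x y).and (eq x y).not).or hfork).congr (x + y + 1) fun T v V hv => ?_
  have hx := hv.1 x (by omega)
  have hy := hv.1 y (by omega)
  have hxa : x ≠ x + y + 1 := by omega
  have hxb : x ≠ x + y + 2 := by omega
  have hya : y ≠ x + y + 1 := by omega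
  have hyb : y ≠ x + y + 2 := by omega
  simp only [node_lt_iff, UTree.descR, UTree.sibR, Function.update_self, ne_eq, hxa, hxb, hya,
    hyb, Nat.add_right_inj, OfNat.one_ne_ofNat, not_false_eq_true, Function.update_of_ne, hx, hy,
    true_and]
  refine or_congr Iff.rfl ⟨?_, ?_⟩
  · rintro ⟨s, hs, t, ht, ⟨⟨_, _, u, i, j, rfl, rfl, hij⟩, hne⟩, ⟨_, hsx⟩, ⟨_, hty⟩⟩
    exact ⟨u, i, j, hij.lt_of_ne (by simpa using hne), hsx, hty⟩
  · rintro ⟨u, i, j, hij, hux, huy⟩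
    have hi := T.prefix_closed hx hux
    have hj := T.prefix_closed hy huy
    exact ⟨_, hi, _, hj, ⟨⟨hi, hj, u, i, j, rfl, rfl, hij.le⟩, by simp [hij.ne]⟩, ⟨hi, hux⟩,
      ⟨hj, huy⟩⟩

/-- `K` counts the elements of `X` upwards, starting at `1`, as far as `R` can tell the numbers
apart. -/
structure IsCounter {α R : Type*} [LT α] [AddMonoidWithOne R] (X : Set α) (K : α → R) : Prop where
  first : ∀ x ∈ X, (∀ y ∈ X, ¬ y < x) → K x = 1
  next : ∀ x ∈ X, ∀ y ∈ X, x < y → (∀ z ∈ X, ¬ (x < z ∧ z < y)) → K y = K x + 1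

section Counting

variable {α R : Type*} [LinearOrder α] [AddMonoidWithOne R] {X : Set α}

theorem isCounter_ncard (hX : X.Finite) :
    IsCounter X fun x => ((X ∩ Set.Iic x).ncard : R) where
  first x hx hmin := by
    have : X ∩ Set.Iic x = {x} := Set.eq_singleton_iff_unique_mem.2
      ⟨⟨hx, le_rfl⟩, fun z hz => hz.2.eq_of_not_lt (hmin z hz.1)⟩
    simp [this]
  next x _ y hy hxy hgap := by
    have : X ∩ Set.Iic y = insert y (X ∩ Set.Iic x) := by
      ext z
      simp only [Set.mem_insert_iff, Set.mem_inter_iff, Set.mem_Iic]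
      constructor
      · rintro ⟨hz, hzy⟩
        by_contra! hcon
        exact hgap z hz ⟨hcon.2 hz, hzy.lt_of_ne hcon.1⟩
      · rintro (rfl | ⟨hz, hzx⟩)
        exacts [⟨hy, le_rfl⟩, ⟨hz, hzx.trans hxy.le⟩]
    simp only [this]
    rw [Set.ncard_insert_of_notMem (by simp [hxy]) (hX.subset Set.inter_subset_left)]
    push_cast; rfl

theorem IsCounter.eqOn {K K' : α → R} (hK : IsCounter X K) (hK' : IsCounter X K')
    (hX : X.Finite) : Set.EqOn K K' X := fun x hx => by
  refine hX.wellFoundedOn.induction (r := (· < ·)) (P := fun x => K x = K' x) hx fun y hy ih => ?_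
  by_cases hmin : ∀ z ∈ X, ¬ z < y
  · rw [hK.first y hy hmin, hK'.first y hy hmin]
  push Not at hmin
  obtain ⟨x, ⟨hx, hxy⟩, hmax⟩ :=
    Set.exists_max_image (X ∩ Set.Iio y) id (hX.subset Set.inter_subset_left) hmin
  have hgap : ∀ z ∈ X, ¬ (x < z ∧ z < y) := fun z hz hxzy => (hmax z ⟨hz, hxzy.2⟩).not_gt hxzy.1
  rw [hK.next x hx y hy hxy hgap, hK'.next x hx y hy hxy hgap, ih x hx hxy]

theorem natCast_ncard_eq_zero_iff (hX : X.Finite) : (X.ncard : R) = 0 ↔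
    ∃ K : α → R, IsCounter X K ∧ ∀ x ∈ X, (∀ y ∈ X, ¬ x < y) → K x = 0 := by
  have hlast {x : α} (hx : ∀ y ∈ X, ¬ x < y) : X ∩ Set.Iic x = X :=
    Set.inter_eq_left.2 fun y hy => not_lt.1 (hx y hy)
  constructor
  · exact fun h => ⟨_, isCounter_ncard hX, fun x _ hmax => by rwa [hlast hmax]⟩
  · rintro ⟨K, hK, hzero⟩
    obtain rfl | hne := X.eq_empty_or_nonempty
    · simp
    obtain ⟨x, hx, hmax⟩ := Set.exists_max_image X id hX hne
    have hmax' : ∀ y ∈ X, ¬ x < y := fun y hy => not_lt.2 (hmax y hy)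
    rw [← hzero x hx hmax', ← hlast hmax']
    exact (hK.eqOn (isCounter_ncard hX) hX hx).symm

end Counting

theorem Definable.ncard_mod {A : Type} (k X : ℕ) :
    Definable (MSO A) fun _ _ V => (V X).ncard % (k + 2) = 0 := by
  let e : ZMod (k + 2) ↪ ℕ :=
    ⟨fun c => X + 1 + c.val, fun c d h => ZMod.val_injective _ (Nat.add_left_cancel h)⟩
  have hfirst := (((lt (A := A) 1 0).not.forall_mem 1 X).imp (mem (e 1) 0)).forall_mem 0 X
  have hnext := ((((lt (A := A) 0 1).imp ((((lt 0 2).and (lt 2 1)).not.forall_mem 2 X).imp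
    (forall_finite fun c => (mem (e c) 0).imp (mem (e (c + 1)) 1)))).forall_mem 1 X)).forall_mem 0 X
  have hlast := (((lt (A := A) 0 1).not.forall_mem 1 X).imp (mem (e 0) 0)).forall_mem 0 X
  refine (((hfirst.and hnext).and hlast).exists_coloring e).congr (X + 1) fun T v V hv => ?_
  have hVX : ∀ x ∈ V X, x ∈ T.dom := hv.2 X X.lt_succ_self
  have hfin : (V X).Finite := T.dom.finite_toSet.subset hVX
  have hX : ¬ ∃ c, e c = X := by
    rintro ⟨c, hc⟩
    have : X + 1 + c.val = X := hc
    omega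
  rw [← Nat.dvd_iff_mod_eq_zero, ← ZMod.natCast_eq_zero_iff, natCast_ncard_eq_zero_iff hfin]
  refine exists_congr fun K => ?_
  simp only [Function.extend_apply' _ _ _ hX, e.injective.extend_apply, Function.update_self,
    Function.update_of_ne, ne_eq, zero_ne_one, OfNat.zero_ne_ofNat, OfNat.one_ne_ofNat,
    not_false_eq_true, Set.mem_ofPred_eq]
  constructor
  · rintro ⟨⟨hfirst, hnext⟩, hlast⟩
    exact ⟨⟨fun x hx hmin => (hfirst x hx hmin).2, fun x hx y hy hxy hgap =>
      (hnext x hx y hy hxy hgap (K x) ⟨hVX x hx, rfl⟩).2⟩, fun x hx hmax => (hlast x hx hmax).2⟩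
  · rintro ⟨hK, hlast⟩
    exact ⟨⟨fun x hx hmin => ⟨hVX x hx, hK.first x hx hmin⟩, fun x hx y hy hxy hgap c hc =>
      ⟨hVX y hy, hc.2 ▸ hK.next x hx y hy hxy hgap⟩⟩, fun x hx hmax => ⟨hVX x hx, hlast x hx hmax⟩⟩

theorem Definable.sat_msomod {A : Type} (ψ : MSOmod A) :
    Definable (MSO A) fun T v V => ψ.Sat T v V := by
  induction ψ with
  | eq x y => exact .eq x y
  | desc x y => exact .desc x y
  | lab a x => exact ⟨.lab a x, 0, fun _ _ _ _ => Iff.rfl⟩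
  | mem X x => exact .mem X x
  | modq k X => exact .ncard_mod k X
  | not ψ ih => exact ih.not
  | and ψ χ ihψ ihχ => exact ihψ.and ihχ
  | exFO n ψ ih => exact ih.exFO n
  | exSO n ψ ih => exact ih.exSO n

/-- `f` is an isomorphism of the underlying unordered trees. -/
structure IsUIso {A : Type} (f : Node → Node) (T T' : UTree A) : Prop where
  bijOn : Set.BijOn f T.dom T'.dom
  label_eq : ∀ s ∈ T.dom, T'.label (f s) = T.label s
  childR_iff : ∀ s ∈ T.dom, ∀ t ∈ T.dom, (T.childR s t ↔ T'.childR (f s) (f t))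

theorem uIso_iff {A : Type} {T T' : UTree A} : UIso T T' ↔ ∃ f, IsUIso f T T' :=
  exists_congr fun _ => ⟨fun h => ⟨h.1, h.2.1, h.2.2⟩, fun h => ⟨h.1, h.2, h.3⟩⟩

theorem UTree.descR_iff_reflTransGen {A : Type} {T : UTree A} {s t : Node} :
    T.descR s t ↔ s ∈ T.dom ∧ Relation.ReflTransGen T.childR s t := by
  constructor
  · rintro ⟨hs, ht, u, rfl⟩
    refine ⟨hs, ?_⟩
    induction u using List.reverseRecOn with
    | nil => simpa using .refl
    | append_singleton u i ih =>
      have hu : s ++ u ∈ T.dom := T.prefix_closed ht (by simp [← List.append_assoc])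
      exact (ih hu).tail ⟨hu, ht, i, by simp⟩
  · rintro ⟨hs, h⟩
    induction h with
    | refl => exact ⟨hs, hs, List.prefix_rfl⟩
    | tail _ hc ih =>
      obtain ⟨_, hc, i, rfl⟩ := hc
      exact ⟨hs, hc, ih.2.2.trans (List.prefix_append _ _)⟩

namespace IsUIso

variable {A : Type} {T T' : UTree A} {f : Node → Node} {s t : Node}

theorem symm (h : IsUIso f T T') : IsUIso (Function.invFunOn f T.dom) T' T := by
  have hinv := h.bijOn.invOn_invFunOn
  have hbij := hinv.symm.bijOn h.bijOn.surjOn.mapsTo_invFunOn h.bijOn.mapsTo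
  refine ⟨hbij, fun s hs => ?_, fun s hs t ht => ?_⟩
  · rw [← h.label_eq _ (hbij.mapsTo hs), hinv.2 hs]
  · rw [h.childR_iff _ (hbij.mapsTo hs) _ (hbij.mapsTo ht), hinv.2 hs, hinv.2 ht]

theorem descR_map (h : IsUIso f T T') (hst : T.descR s t) : T'.descR (f s) (f t) := by
  rw [UTree.descR_iff_reflTransGen] at hst ⊢
  exact ⟨h.bijOn.mapsTo hst.1, hst.2.lift f fun x y hxy =>
    (h.childR_iff x hxy.1 y hxy.2.1).1 hxy⟩

theorem descR_iff (h : IsUIso f T T') (hs : s ∈ T.dom) (ht : t ∈ T.dom) :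
    T'.descR (f s) (f t) ↔ T.descR s t := by
  refine ⟨fun hst => ?_, h.descR_map⟩
  have hinv := h.bijOn.invOn_invFunOn
  simpa only [hinv.1 hs, hinv.1 ht] using h.symm.descR_map hst

theorem sat_iff (h : IsUIso f T T') (ψ : MSOmod A) {v : ℕ → Node} {V : ℕ → Set Node}
    (hv : ∀ i, v i ∈ T.dom) (hV : ∀ i, V i ⊆ T.dom) :
    MSOmod.Sat T' (f ∘ v) ((f '' ·) ∘ V) ψ ↔ MSOmod.Sat T v V ψ := by
  induction ψ generalizing v V with
  | eq x y => exact h.bijOn.injOn.eq_iff (hv x) (hv y)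
  | desc x y => exact h.descR_iff (hv x) (hv y)
  | lab a x =>
    have hx : f (v x) ∈ T'.dom := h.bijOn.mapsTo (hv x)
    simp only [MSOmod.Sat, Function.comp_apply, hv x, hx, h.label_eq _ (hv x)]
  | mem X x => exact h.bijOn.injOn.mem_image_iff (hV X) (hv x)
  | modq k X =>
    simp only [MSOmod.Sat, Function.comp_apply, (h.bijOn.injOn.mono (hV X)).ncard_image]
  | not ψ ih => exact not_congr (ih hv hV)
  | and ψ χ ihψ ihχ => exact and_congr (ihψ hv hV) (ihχ hv hV)
  | exFO n ψ ih =>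
    have hψ : ∀ s ∈ T.dom, _ := fun s hs => ih (v := Function.update v n s)
      ((Function.forall_update_iff v fun _ x => x ∈ T.dom).2 ⟨hs, fun i _ => hv i⟩) hV
    simp only [MSOmod.Sat, ← h.bijOn.image_eq, ← Finset.mem_coe, Set.exists_mem_image,
      ← Function.comp_update]
    exact exists_congr fun s => and_congr_right fun hs => hψ s hs
  | exSO n ψ ih =>
    have hψ : ∀ S : Set Node, S ⊆ T.dom → _ := fun S hS => ih (V := Function.update V n S) hv
      ((Function.forall_update_iff V fun _ X => X ⊆ T.dom).2 ⟨hS, fun i _ => hV i⟩)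
    simp only [MSOmod.Sat, ← h.bijOn.image_eq, Set.exists_subset_image_iff, ← Function.comp_update]
    exact exists_congr fun S => and_congr_right fun hS => hψ S hS

end IsUIso

theorem exists_invariant_mso_of_msomod {A : Type} {L : Set (UTree A)} {ψ : MSOmod A}
    (hψ : ψ.DefinesB L) : ∃ φ : MSO A, NsInvariant φ ∧ φ.DefinesB L := by
  obtain ⟨φ, hφ⟩ := Definable.exists_sentence
    ((Definable.sat_msomod ψ).of_iff fun T v V => (hψ T v V).symm)
  refine ⟨φ, fun T T' hTT' v v' V V' => ?_, hφ⟩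
  obtain ⟨f, hf⟩ := uIso_iff.1 hTT'
  calc φ.Sat T v V
    _ ↔ T ∈ L := (hφ T v V).symm
    _ ↔ ψ.Sat T (fun _ => []) (fun _ => ∅) := hψ T _ _
    _ ↔ ψ.Sat T' (f ∘ fun _ => []) ((f '' ·) ∘ fun _ => ∅) :=
      (hf.sat_iff ψ (fun _ => T.nil_mem) fun _ => Set.empty_subset _).symm
    _ ↔ T' ∈ L := (hψ T' _ _).symm
    _ ↔ φ.Sat T' v' V' := hφ T' v' V'

/-! ### Bottom-up automata -/

theorem prefix_iff_eq_or_exists_append_singleton {s t : Node} :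
    s <+: t ↔ t = s ∨ ∃ j, s ++ [j] <+: t := by
  constructor
  · rintro ⟨_ | ⟨j, u⟩, rfl⟩
    · exact Or.inl (by simp)
    · exact Or.inr ⟨j, u, by simp⟩
  · rintro (rfl | ⟨j, h⟩)
    exacts [List.prefix_rfl, (List.prefix_append _ _).trans h]

theorem eq_of_append_singleton_prefix {s t : Node} {i j : ℕ} (hi : s ++ [i] <+: t)
    (hj : s ++ [j] <+: t) : i = j := by
  have h : s ++ [i] = s ++ [j] :=
    (List.prefix_of_prefix_length_le hi hj (by simp)).eq_of_length (by simp)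
  simpa using h

namespace UTree

variable {A : Type} (T : UTree A) {p s t : Node} {i : ℕ}

open Classical in
/-- The nodes below the children `p ++ [j]` of `p` with `i ≤ j`, these children included. Bottom-up
automata evaluate these forests from right to left. -/
noncomputable def forest (p : Node) (i : ℕ) : Finset Node :=
  {t ∈ T.dom | ∃ j, i ≤ j ∧ p ++ [j] <+: t}

theorem mem_forest : t ∈ T.forest p i ↔ t ∈ T.dom ∧ ∃ j, i ≤ j ∧ p ++ [j] <+: t := by
  simp [forest]

variable {T}

theorem mem_dom_of_append_singleton_prefix {j : ℕ} (ht : t ∈ T.dom) (hij : i ≤ j)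
    (hj : p ++ [j] <+: t) : p ++ [i] ∈ T.dom := by
  have hmem : p ++ [j] ∈ T.dom := T.prefix_closed ht hj
  obtain rfl | hlt := hij.eq_or_lt
  exacts [hmem, T.sib_closed hmem hlt]

theorem forest_eq_empty (h : p ++ [i] ∉ T.dom) : T.forest p i = ∅ := by
  refine Finset.eq_empty_of_forall_notMem fun t ht => h ?_
  obtain ⟨ht, j, hij, hj⟩ := T.mem_forest.1 ht
  exact mem_dom_of_append_singleton_prefix ht hij hj

theorem forest_eq_insert (h : p ++ [i] ∈ T.dom) :
    T.forest p i = insert (p ++ [i]) (T.forest (p ++ [i]) 0 ∪ T.forest p (i + 1)) := by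
  ext t
  simp only [mem_forest, Finset.mem_insert, Finset.mem_union, zero_le, true_and]
  constructor
  · rintro ⟨ht, j, hij, hj⟩
    obtain rfl | hlt := hij.eq_or_lt
    · obtain rfl | hk := prefix_iff_eq_or_exists_append_singleton.1 hj
      exacts [Or.inl rfl, Or.inr (Or.inl ⟨ht, hk⟩)]
    · exact Or.inr (Or.inr ⟨ht, j, hlt, hj⟩)
  · rintro (rfl | ⟨ht, hk⟩ | ⟨ht, j, hij, hj⟩)
    · exact ⟨h, i, le_rfl, List.prefix_rfl⟩
    · exact ⟨ht, i, le_rfl, prefix_iff_eq_or_exists_append_singleton.2 (Or.inr hk)⟩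
    · exact ⟨ht, j, (Nat.le_succ i).trans hij, hj⟩

theorem self_notMem_forest : p ∉ T.forest p i := fun h => by
  obtain ⟨-, j, -, hj⟩ := T.mem_forest.1 h
  simpa using hj.length_le

theorem disjoint_insert_forest :
    Disjoint (insert (p ++ [i]) (T.forest (p ++ [i]) 0)) (T.forest p (i + 1)) := by
  refine Finset.disjoint_left.2 fun t ht ht' => ?_
  obtain ⟨-, j, hij, hj⟩ := T.mem_forest.1 ht'
  have hi : p ++ [i] <+: t := by
    rw [Finset.mem_insert, mem_forest] at ht
    exact prefix_iff_eq_or_exists_append_singleton.2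
      (ht.imp_right fun h => h.2.imp fun _ => And.right)
  have := eq_of_append_singleton_prefix hi hj
  omega

theorem exists_glued {B : Type*} (b : B) (ℓ₁ ℓ₂ : Node → B) (p : Node) (i : ℕ) :
    ∃ ℓ : Node → B, ℓ (p ++ [i]) = b ∧ (∀ t ∈ T.forest (p ++ [i]) 0, ℓ t = ℓ₁ t) ∧
      ∀ t ∈ T.forest p (i + 1), ℓ t = ℓ₂ t := by
  classical
  refine ⟨Function.update ((T.forest (p ++ [i]) 0).piecewise ℓ₁ ℓ₂) (p ++ [i]) b,
    Function.update_self _ _ _, fun t ht => ?_, fun t ht => ?_⟩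
  · have hne : t ≠ p ++ [i] := by rintro rfl; exact self_notMem_forest ht
    simp [hne, ht]
  · have hnot := Finset.disjoint_right.1 disjoint_insert_forest ht
    rw [Finset.mem_insert, not_or] at hnot
    simp [hnot]

theorem forest_append_ssubset (h : p ++ [i] ∈ T.dom) :
    T.forest (p ++ [i]) 0 ⊂ T.forest p i := by
  rw [forest_eq_insert h]
  exact (Finset.ssubset_insert self_notMem_forest).trans_subset
    (Finset.insert_subset_insert _ Finset.subset_union_left)

theorem forest_succ_ssubset (h : p ++ [i] ∈ T.dom) : T.forest p (i + 1) ⊂ T.forest p i := by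
  rw [forest_eq_insert h]
  exact (Finset.ssubset_insert (Finset.disjoint_left.1 disjoint_insert_forest
    (Finset.mem_insert_self _ _))).trans_subset
      (Finset.insert_subset_insert _ Finset.subset_union_right)

theorem exists_prefix_iff {P : Node → Prop} (hs : s ∈ T.dom) :
    (∃ t ∈ T.dom, s <+: t ∧ P t) ↔ P s ∨ ∃ t ∈ T.forest s 0, P t := by
  simp only [mem_forest, zero_le, true_and, prefix_iff_eq_or_exists_append_singleton (s := s)]
  constructor
  · rintro ⟨t, ht, rfl | hst, hP⟩
    exacts [Or.inl hP, Or.inr ⟨t, ⟨ht, hst⟩, hP⟩]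
  · rintro (hP | ⟨t, ⟨ht, hst⟩, hP⟩)
    exacts [⟨s, hs, Or.inl rfl, hP⟩, ⟨t, ht, Or.inr hst, hP⟩]

theorem exists_mem_dom_iff {P : Node → Prop} :
    (∃ t ∈ T.dom, P t) ↔ P [] ∨ ∃ t ∈ T.forest [] 0, P t := by
  simpa using exists_prefix_iff (P := P) T.nil_mem

theorem dom_eq_insert_forest : T.dom = insert [] (T.forest [] 0) := by
  ext s
  simpa using exists_mem_dom_iff (T := T) (P := (· = s))

theorem exists_sibR_append_singleton_iff {P : Node → Prop} (h : p ++ [i] ∈ T.dom) :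
    (∃ y, T.sibR (p ++ [i]) y ∧ P y) ↔ ∃ j ≥ i, p ++ [j] ∈ T.dom ∧ P (p ++ [j]) := by
  constructor
  · rintro ⟨_, ⟨-, hy, u, k, j, heq, rfl, hkj⟩, hP⟩
    obtain ⟨rfl, rfl⟩ := List.append_singleton_inj.1 heq
    exact ⟨j, hkj, hy, hP⟩
  · rintro ⟨j, hij, hj, hP⟩
    exact ⟨p ++ [j], ⟨h, hj, p, i, j, rfl, rfl, hij⟩, hP⟩

theorem forest_induction (T : UTree A) {C : Node → ℕ → Prop}
    (empty : ∀ p i, p ++ [i] ∉ T.dom → C p i)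
    (insert : ∀ p i, p ++ [i] ∈ T.dom → C (p ++ [i]) 0 → C p (i + 1) → C p i)
    (p : Node) (i : ℕ) : C p i := by
  by_cases h : p ++ [i] ∈ T.dom
  · exact insert p i h (forest_induction T empty insert _ _) (forest_induction T empty insert _ _)
  · exact empty p i h
termination_by (T.forest p i).card
decreasing_by
  exacts [Finset.card_lt_card (forest_append_ssubset h),
    Finset.card_lt_card (forest_succ_ssubset h)]

end UTree

/-- A deterministic bottom-up automaton on ordered trees whose nodes carry letters of `B`. At a
node, `step` combines the letter, the state of the forest of descendants and the state of the
forest of right siblings; acceptance also inspects the letter of the root. -/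
structure TreeAutomaton (B Q : Type) where
  start : Q
  step : B → Q → Q → Q
  accept : B → Q → Prop

namespace TreeAutomaton

variable {A B C Q : Type} (M : TreeAutomaton B Q) (T : UTree A) (ℓ : Node → B) {p : Node} {i : ℕ}

open Classical in
/-- The state reached on `T.forest p i`. -/
noncomputable def run (p : Node) (i : ℕ) : Q :=
  if _h : p ++ [i] ∈ T.dom then M.step (ℓ (p ++ [i])) (run (p ++ [i]) 0) (run p (i + 1))
  else M.start
termination_by (T.forest p i).card
decreasing_by
  exacts [Finset.card_lt_card (UTree.forest_append_ssubset _h),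
    Finset.card_lt_card (UTree.forest_succ_ssubset _h)]

/-- Acceptance of the tree `T` with the letters `ℓ` on its nodes. -/
def Accepts : Prop :=
  M.accept (ℓ []) (M.run T ℓ [] 0)

variable {T}

theorem run_of_mem (h : p ++ [i] ∈ T.dom) :
    M.run T ℓ p i = M.step (ℓ (p ++ [i])) (M.run T ℓ (p ++ [i]) 0) (M.run T ℓ p (i + 1)) := by
  rw [run, dif_pos h]

theorem run_of_notMem (h : p ++ [i] ∉ T.dom) : M.run T ℓ p i = M.start := by
  rw [run, dif_neg h]

theorem run_congr {M : TreeAutomaton B Q} {M' : TreeAutomaton C Q} {ℓ : Node → B} {ℓ' : Node → C}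
    (hstart : M.start = M'.start)
    (hstep : ∀ t ∈ T.forest p i, M.step (ℓ t) = M'.step (ℓ' t)) :
    M.run T ℓ p i = M'.run T ℓ' p i := by
  induction p, i using T.forest_induction with
  | empty p i h => rw [run_of_notMem _ _ h, run_of_notMem _ _ h, hstart]
  | insert p i h ihc ihs =>
    simp only [UTree.forest_eq_insert h, Finset.forall_mem_insert, Finset.forall_mem_union] at hstep
    rw [run_of_mem _ _ h, run_of_mem _ _ h, hstep.1, ihc hstep.2.1, ihs hstep.2.2]

/-- The powerset automaton: it guesses letters related by `r` to the actual ones. -/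
def relabel (r : C → B → Prop) : TreeAutomaton C (Set Q) where
  start := {M.start}
  step c X Y := {q | ∃ b, r c b ∧ ∃ x ∈ X, ∃ y ∈ Y, M.step b x y = q}
  accept c X := ∃ b, r c b ∧ ∃ x ∈ X, M.accept b x

theorem run_relabel [Nonempty B] (r : C → B → Prop) (ℓ : Node → C) (p : Node) (i : ℕ) :
    (M.relabel r).run T ℓ p i =
      {q | ∃ ℓ' : Node → B, (∀ s ∈ T.forest p i, r (ℓ s) (ℓ' s)) ∧ M.run T ℓ' p i = q} := by
  induction p, i using T.forest_induction with
  | empty p i h =>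
    ext q
    simp only [run_of_notMem _ _ h, UTree.forest_eq_empty h, relabel]
    exact ⟨fun hq => ⟨Classical.arbitrary _, by simp, hq.symm⟩, fun ⟨_, _, hq⟩ => hq.symm⟩
  | insert p i h ihc ihs =>
    ext q
    simp only [run_of_mem _ _ h, UTree.forest_eq_insert h, relabel, Finset.forall_mem_insert,
      Finset.forall_mem_union]
    simp only [← relabel.eq_1, ihc, ihs]
    constructor
    · rintro ⟨b, hb, _, ⟨ℓ₁, hℓ₁, rfl⟩, _, ⟨ℓ₂, hℓ₂, rfl⟩, rfl⟩
      obtain ⟨ℓ', rfl, hbelow, hright⟩ := T.exists_glued b ℓ₁ ℓ₂ p i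
      refine ⟨ℓ', ⟨hb, fun s hs => hbelow s hs ▸ hℓ₁ s hs, fun s hs => hright s hs ▸ hℓ₂ s hs⟩, ?_⟩
      rw [run_congr rfl fun s hs => by rw [hbelow s hs],
        run_congr (p := p) rfl fun s hs => by rw [hright s hs]]
    · rintro ⟨ℓ', ⟨hroot, hbelow, hright⟩, rfl⟩
      exact ⟨_, hroot, _, ⟨ℓ', hbelow, rfl⟩, _, ⟨ℓ', hright, rfl⟩, rfl⟩

end TreeAutomaton

/-- `R` is the relation recognized by a finite bottom-up automaton. -/
def Recognizable {A B : Type} (R : UTree A → (Node → B) → Prop) : Prop :=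
  ∃ (Q : Type) (_ : Finite Q) (M : TreeAutomaton B Q), ∀ T ℓ, R T ℓ ↔ M.Accepts T ℓ

namespace Recognizable

variable {A B : Type} {R R' : UTree A → (Node → B) → Prop}

theorem of_iff (h : Recognizable R) (hRR' : ∀ T ℓ, R T ℓ ↔ R' T ℓ) : Recognizable R' := by
  rwa [show R' = R from funext₂ fun T ℓ => propext (hRR' T ℓ).symm]

theorem congr_labels (h : Recognizable R) {T : UTree A} {ℓ ℓ' : Node → B}
    (hℓ : ∀ s ∈ T.dom, ℓ s = ℓ' s) : R T ℓ ↔ R T ℓ' := by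
  obtain ⟨Q, _, M, hM⟩ := h
  rw [UTree.dom_eq_insert_forest, Finset.forall_mem_insert] at hℓ
  rw [hM, hM, TreeAutomaton.Accepts, TreeAutomaton.Accepts, hℓ.1,
    TreeAutomaton.run_congr rfl fun t ht => by rw [hℓ.2 t ht]]

theorem not (h : Recognizable R) : Recognizable fun T ℓ => ¬ R T ℓ := by
  obtain ⟨Q, hQ, M, hM⟩ := h
  let N : TreeAutomaton B Q := ⟨M.start, M.step, fun b q => ¬ M.accept b q⟩
  have hN (T : UTree A) (ℓ : Node → B) : N.run T ℓ [] 0 = M.run T ℓ [] 0 :=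
    TreeAutomaton.run_congr rfl fun _ _ => rfl
  refine ⟨Q, hQ, N, fun T ℓ => (not_congr (hM T ℓ)).trans ?_⟩
  rw [TreeAutomaton.Accepts, TreeAutomaton.Accepts, hN]

theorem and (h : Recognizable R) (h' : Recognizable R') :
    Recognizable fun T ℓ => R T ℓ ∧ R' T ℓ := by
  obtain ⟨Q, _, M, hM⟩ := h
  obtain ⟨Q', _, M', hM'⟩ := h'
  let N : TreeAutomaton B (Q × Q') :=
    { start := (M.start, M'.start)
      step := fun b x y => (M.step b x.1 y.1, M'.step b x.2 y.2)
      accept := fun b x => M.accept b x.1 ∧ M'.accept b x.2 }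
  have hN (T : UTree A) (ℓ : Node → B) (p : Node) (i : ℕ) :
      N.run T ℓ p i = (M.run T ℓ p i, M'.run T ℓ p i) := by
    induction p, i using T.forest_induction with
    | empty p i h => simp only [TreeAutomaton.run_of_notMem _ _ h, N]
    | insert p i h ihc ihs => simp only [TreeAutomaton.run_of_mem _ _ h, ihc, ihs, N]
  refine ⟨Q × Q', inferInstance, N, fun T ℓ => ?_⟩
  refine (and_congr (hM T ℓ) (hM' T ℓ)).trans ?_
  rw [TreeAutomaton.Accepts, TreeAutomaton.Accepts, TreeAutomaton.Accepts, hN]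

theorem exists_relabel (r : B → B → Prop) (h : Recognizable R) :
    Recognizable fun T ℓ => ∃ ℓ' : Node → B, (∀ s ∈ T.dom, r (ℓ s) (ℓ' s)) ∧ R T ℓ' := by
  obtain ⟨Q, _, M, hM⟩ := h
  refine ⟨Set Q, inferInstance, M.relabel r, fun T ℓ => ?_⟩
  have : Nonempty B := ⟨ℓ []⟩
  rw [TreeAutomaton.Accepts, TreeAutomaton.run_relabel]
  simp only [hM, TreeAutomaton.Accepts, TreeAutomaton.relabel]
  constructor
  · rintro ⟨ℓ', hr, hacc⟩
    exact ⟨ℓ' [], hr [] T.nil_mem, _,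
      ⟨ℓ', fun s hs => hr s (T.mem_forest.1 hs).1, rfl⟩, hacc⟩
  · rintro ⟨b, hb, _, ⟨ℓ₁, hr, rfl⟩, hacc⟩
    have hne : ∀ s ∈ T.forest [] 0, s ≠ [] := by
      rintro s hs rfl
      exact UTree.self_notMem_forest hs
    refine ⟨Function.update ℓ₁ [] b, ?_, ?_⟩
    · rw [UTree.dom_eq_insert_forest, Finset.forall_mem_insert, Function.update_self]
      exact ⟨hb, fun s hs => by simpa [hne s hs] using hr s hs⟩
    · rwa [Function.update_self, TreeAutomaton.run_congr (M' := M) (ℓ' := ℓ₁) rfl fun s hs => by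
        rw [Function.update_of_ne (hne s hs)]]

open Classical in
theorem min_card (N : ℕ) (S : B → Prop) (P : ℕ → Prop) :
    Recognizable fun (T : UTree A) ℓ => P (min N {s ∈ T.dom | S (ℓ s)}.card) := by
  let M : TreeAutomaton B (Fin (N + 1)) :=
    { start := 0
      step := fun b x y => ⟨min N ((if S b then 1 else 0) + (x + y)), by omega⟩
      accept := fun b x => P (min N ((if S b then 1 else 0) + x)) }
  have hM (T : UTree A) (ℓ : Node → B) (p : Node) (i : ℕ) :
      (M.run T ℓ p i : ℕ) = min N {s ∈ T.forest p i | S (ℓ s)}.card := by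
    induction p, i using T.forest_induction with
    | empty p i h => simp [TreeAutomaton.run_of_notMem _ _ h, UTree.forest_eq_empty h, M]
    | insert p i h ihc ihs =>
      rw [TreeAutomaton.run_of_mem _ _ h, UTree.forest_eq_insert h, ← Finset.insert_union,
        Finset.card_filter, Finset.sum_union UTree.disjoint_insert_forest,
        Finset.sum_insert UTree.self_notMem_forest]
      simp only [M, ihc, ihs, Finset.card_filter]
      omega
  refine ⟨Fin (N + 1), inferInstance, M, fun T ℓ => ?_⟩
  simp only [TreeAutomaton.Accepts, UTree.dom_eq_insert_forest, Finset.card_filter,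
    Finset.sum_insert UTree.self_notMem_forest, M, hM]
  exact iff_of_eq (congrArg P (by omega))

theorem exists_mem (S : B → Prop) :
    Recognizable fun (T : UTree A) ℓ => ∃ s ∈ T.dom, S (ℓ s) := by
  classical
  refine (min_card 1 S (· ≠ 0)).of_iff fun T ℓ => ?_
  rw [Ne, Nat.min_eq_zero_iff, Finset.card_eq_zero, Finset.filter_eq_empty_iff]
  simp

theorem existsUnique_mem (S : B → Prop) :
    Recognizable fun (T : UTree A) ℓ => ∃! s, s ∈ T.dom ∧ S (ℓ s) := by
  classical
  refine (min_card 2 S (· = 1)).of_iff fun T ℓ => ?_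
  rw [show ∀ n, min 2 n = 1 ↔ n = 1 by omega, Finset.card_eq_one]
  simp [Finset.eq_singleton_iff_unique_mem, ExistsUnique]

theorem exists_descR (S S' : B → Prop) :
    Recognizable fun (T : UTree A) ℓ => ∃ x y, T.descR x y ∧ S (ℓ x) ∧ S' (ℓ y) := by
  let M : TreeAutomaton B (Prop × Prop) :=
    { start := (False, False)
      step := fun b x y => (S' b ∨ x.1 ∨ y.1, S b ∧ (S' b ∨ x.1) ∨ x.2 ∨ y.2)
      accept := fun b x => S b ∧ (S' b ∨ x.1) ∨ x.2 }
  have hM (T : UTree A) (ℓ : Node → B) (p : Node) (i : ℕ) :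
      M.run T ℓ p i = (∃ y ∈ T.forest p i, S' (ℓ y),
        ∃ x ∈ T.forest p i, S (ℓ x) ∧ ∃ y ∈ T.dom, x <+: y ∧ S' (ℓ y)) := by
    induction p, i using T.forest_induction with
    | empty p i h => simp [TreeAutomaton.run_of_notMem _ _ h, UTree.forest_eq_empty h, M]
    | insert p i h ihc ihs =>
      rw [TreeAutomaton.run_of_mem _ _ h, ihc, ihs, UTree.forest_eq_insert h]
      simp only [M, Finset.exists_mem_insert, Finset.mem_union, or_and_right, exists_or,
        UTree.exists_prefix_iff h]
  refine ⟨Prop × Prop, inferInstance, M, fun T ℓ => ?_⟩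
  have hdom : (∃ x y, T.descR x y ∧ S (ℓ x) ∧ S' (ℓ y)) ↔
      ∃ x ∈ T.dom, S (ℓ x) ∧ ∃ y ∈ T.dom, x <+: y ∧ S' (ℓ y) :=
    ⟨fun ⟨x, y, ⟨hx, hy, hxy⟩, hS, hS'⟩ => ⟨x, hx, hS, y, hy, hxy, hS'⟩,
      fun ⟨x, hx, hS, y, hy, hxy, hS'⟩ => ⟨x, y, ⟨hx, hy, hxy⟩, hS, hS'⟩⟩
  refine hdom.trans ?_
  rw [TreeAutomaton.Accepts, hM, UTree.exists_mem_dom_iff, UTree.exists_prefix_iff T.nil_mem]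

theorem exists_sibR (S S' : B → Prop) :
    Recognizable fun (T : UTree A) ℓ => ∃ x y, T.sibR x y ∧ S (ℓ x) ∧ S' (ℓ y) := by
  let M : TreeAutomaton B (Prop × Prop) :=
    { start := (False, False)
      step := fun b x y => (S' b ∨ y.1, S b ∧ (S' b ∨ y.1) ∨ x.2 ∨ y.2)
      accept := fun _ x => x.2 }
  have hM (T : UTree A) (ℓ : Node → B) (p : Node) (i : ℕ) :
      M.run T ℓ p i = (∃ j ≥ i, p ++ [j] ∈ T.dom ∧ S' (ℓ (p ++ [j])),
        ∃ x ∈ T.forest p i, S (ℓ x) ∧ ∃ y, T.sibR x y ∧ S' (ℓ y)) := by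
    induction p, i using T.forest_induction with
    | empty p i h =>
      have hsib : ∀ j ≥ i, p ++ [j] ∉ T.dom := fun j hij hj =>
        h (UTree.mem_dom_of_append_singleton_prefix hj hij List.prefix_rfl)
      simp +contextual [TreeAutomaton.run_of_notMem _ _ h, UTree.forest_eq_empty h, M, hsib]
    | insert p i h ihc ihs =>
      rw [TreeAutomaton.run_of_mem _ _ h, ihc, ihs, UTree.forest_eq_insert h]
      have hge : (∃ j ≥ i, p ++ [j] ∈ T.dom ∧ S' (ℓ (p ++ [j]))) ↔
          S' (ℓ (p ++ [i])) ∨ ∃ j ≥ i + 1, p ++ [j] ∈ T.dom ∧ S' (ℓ (p ++ [j])) := by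
        simp only [ge_iff_le, le_iff_eq_or_lt (a := i), Nat.succ_le_iff, or_and_right, exists_or,
          exists_eq_left', h, true_and]
      simp only [M, Finset.exists_mem_insert, Finset.mem_union, or_and_right, exists_or,
        UTree.exists_sibR_append_singleton_iff (P := fun y => S' (ℓ y)) h, hge]
  refine ⟨Prop × Prop, inferInstance, M, fun T ℓ => ?_⟩
  rw [TreeAutomaton.Accepts, hM]
  constructor
  · rintro ⟨_, y, ⟨hx, hy, u, i, j, rfl, rfl, hij⟩, hS, hS'⟩
    exact ⟨u ++ [i], by simpa [UTree.dom_eq_insert_forest] using hx, hS, u ++ [j],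
      ⟨hx, hy, u, i, j, rfl, rfl, hij⟩, hS'⟩
  · rintro ⟨x, -, hx, y, hxy, hy⟩
    exact ⟨x, y, hxy, hx, hy⟩

end Recognizable

/-! ### From `MSO` to automata -/

/-- A letter of `C` together with the first-order variables whose value is the node carrying it
and the set variables whose value contains this node. -/
@[ext]
structure Annotated (C : Type) where
  letter : C
  fo : Set ℕ
  so : Set ℕ

/-- The encoding of a valuation by letters, where `π` coarsens the alphabet. -/
def annotate {A C : Type} (π : A → C) (T : UTree A) (v : ℕ → Node) (V : ℕ → Set Node) (s : Node) :
    Annotated C :=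
  ⟨π (T.label s), {i | v i = s}, {i | s ∈ V i}⟩

/-- `P` is expressed by an automaton that reads annotated letters. -/
def AutomatonDefinable {A C : Type} (π : A → C) (P : ValProp A) : Prop :=
  ∃ R : UTree A → (Node → Annotated C) → Prop, Recognizable R ∧
    ∀ T v V, (∀ i, v i ∈ T.dom) → (P T v V ↔ R T (annotate π T v V))

namespace AutomatonDefinable

variable {A C : Type} {π : A → C} {P P' : ValProp A}

theorem not (h : AutomatonDefinable π P) : AutomatonDefinable π fun T v V => ¬ P T v V := by
  obtain ⟨R, hR, hP⟩ := h
  exact ⟨_, hR.not, fun T v V hv => not_congr (hP T v V hv)⟩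

theorem and (h : AutomatonDefinable π P) (h' : AutomatonDefinable π P') :
    AutomatonDefinable π fun T v V => P T v V ∧ P' T v V := by
  obtain ⟨R, hR, hP⟩ := h
  obtain ⟨R', hR', hP'⟩ := h'
  exact ⟨_, hR.and hR', fun T v V hv => and_congr (hP T v V hv) (hP' T v V hv)⟩

theorem exFO (n : ℕ) (h : AutomatonDefinable π P) :
    AutomatonDefinable π fun T v V => ∃ s ∈ T.dom, P T (Function.update v n s) V := by
  obtain ⟨R, hR, hP⟩ := h
  have hupdate {T : UTree A} {v : ℕ → Node} (hv : ∀ i, v i ∈ T.dom) {s : Node} (hs : s ∈ T.dom) :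
      ∀ i, Function.update v n s i ∈ T.dom :=
    (Function.forall_update_iff v fun _ t => t ∈ T.dom).2 ⟨hs, fun i _ => hv i⟩
  let r (b b' : Annotated C) : Prop :=
    b'.letter = b.letter ∧ b'.so = b.so ∧ ∀ i ≠ n, (i ∈ b'.fo ↔ i ∈ b.fo)
  refine ⟨_, (hR.and (.existsUnique_mem fun b => n ∈ b.fo)).exists_relabel r,
    fun T v V hv => ⟨?_, ?_⟩⟩
  · rintro ⟨s, hs, hPs⟩
    refine ⟨annotate π T (Function.update v n s) V, fun t _ => ⟨rfl, rfl, fun i hi => ?_⟩,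
      (hP T _ V (hupdate hv hs)).1 hPs, s, ?_, ?_⟩
    · simp [annotate, hi]
    · simp [annotate, hs]
    · simp [annotate, eq_comm]
  · rintro ⟨ℓ', hr, hRℓ', s, ⟨hs, hns⟩, huniq⟩
    refine ⟨s, hs, (hP T _ V (hupdate hv hs)).2 ((hR.congr_labels fun t ht => ?_).1 hRℓ')⟩
    obtain ⟨hletter, hso, hfo⟩ := hr t ht
    refine Annotated.ext hletter (Set.ext fun i => ?_) hso
    obtain rfl | hin := eq_or_ne i n
    · simp only [annotate, Set.mem_ofPred_eq, Function.update_self]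
      exact ⟨fun hi => (huniq t ⟨ht, hi⟩).symm, fun hst => hst ▸ hns⟩
    · simpa [annotate, hin] using hfo i hin

theorem exSO (n : ℕ) (h : AutomatonDefinable π P) :
    AutomatonDefinable π fun T v V =>
      ∃ S : Set Node, S ⊆ T.dom ∧ P T v (Function.update V n S) := by
  obtain ⟨R, hR, hP⟩ := h
  let r (b b' : Annotated C) : Prop :=
    b'.letter = b.letter ∧ b'.fo = b.fo ∧ ∀ i ≠ n, (i ∈ b'.so ↔ i ∈ b.so)
  refine ⟨_, hR.exists_relabel r, fun T v V hv => ⟨?_, ?_⟩⟩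
  · rintro ⟨S, -, hPS⟩
    exact ⟨annotate π T v (Function.update V n S),
      fun t _ => ⟨rfl, rfl, fun i hi => by simp [annotate, hi]⟩, (hP T v _ hv).1 hPS⟩
  · rintro ⟨ℓ', hr, hRℓ'⟩
    refine ⟨{s | s ∈ T.dom ∧ n ∈ (ℓ' s).so}, fun s hs => hs.1,
      (hP T v _ hv).2 ((hR.congr_labels fun t ht => ?_).1 hRℓ')⟩
    obtain ⟨hletter, hfo, hso⟩ := hr t ht
    refine Annotated.ext hletter hfo (Set.ext fun i => ?_)
    obtain rfl | hin := eq_or_ne i n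
    · simp [annotate, ht]
    · simpa [annotate, hin] using hso i hin

end AutomatonDefinable

namespace MSO

variable {A C : Type}

/-- The letters that occur in a formula. -/
def letters : MSO A → Set A
  | .eq _ _ | .desc _ _ | .sib _ _ | .mem _ _ => ∅
  | .lab a _ => {a}
  | .not φ | .exFO _ φ | .exSO _ φ => letters φ
  | .and φ ψ => letters φ ∪ letters ψ

theorem finite_letters (φ : MSO A) : φ.letters.Finite := by
  induction φ with
  | eq | desc | sib | mem => exact Set.finite_empty
  | lab a _ => exact Set.finite_singleton a
  | not _ ih | exFO _ _ ih | exSO _ _ ih => exact ih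
  | and _ _ ihφ ihψ => exact ihφ.union ihψ

theorem automatonDefinable_sat {π : A → C} (φ : MSO A)
    (hπ : ∀ a ∈ φ.letters, ∀ b, π b = π a → b = a) :
    AutomatonDefinable π fun T v V => Sat T v V φ := by
  induction φ with
  | eq x y =>
    refine ⟨_, .exists_mem fun b => x ∈ b.fo ∧ y ∈ b.fo, fun T v V hv => ?_⟩
    exact ⟨fun h => ⟨v x, hv x, rfl, Eq.symm h⟩, fun ⟨s, _, hx, hy⟩ => hx.trans hy.symm⟩
  | desc x y =>
    refine ⟨_, .exists_descR (fun b => x ∈ b.fo) fun b => y ∈ b.fo, fun T v V _ => ?_⟩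
    simp [annotate, Sat]
  | sib x y =>
    refine ⟨_, .exists_sibR (fun b => x ∈ b.fo) fun b => y ∈ b.fo, fun T v V _ => ?_⟩
    simp [annotate, Sat]
  | lab a x =>
    refine ⟨_, .exists_mem fun b => x ∈ b.fo ∧ b.letter = π a, fun T v V _ => ⟨?_, ?_⟩⟩
    · rintro ⟨hx, rfl⟩
      exact ⟨v x, hx, rfl, rfl⟩
    · rintro ⟨_, hs, rfl, hlab⟩
      exact ⟨hs, hπ a rfl _ hlab⟩
  | mem X x =>
    refine ⟨_, .exists_mem fun b => x ∈ b.fo ∧ X ∈ b.so, fun T v V hv => ?_⟩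
    refine ⟨fun h => ⟨v x, hv x, rfl, h⟩, ?_⟩
    rintro ⟨_, _, rfl, hX⟩
    exact hX
  | not φ ih => exact (ih hπ).not
  | and φ ψ ihφ ihψ =>
    exact (ihφ fun a ha => hπ a (Or.inl ha)).and (ihψ fun a ha => hπ a (Or.inr ha))
  | exFO n φ ih => exact (ih hπ).exFO n
  | exSO n φ ih => exact (ih hπ).exSO n

/-- Coarsens `A` to a finite alphabet, distinguishing only the letters that occur in `φ`. -/
def occurring (φ : MSO A) (a : A) : Set φ.letters :=
  {b | ↑b = a}

theorem eq_of_occurring_eq {φ : MSO A} {a b : A} (ha : a ∈ φ.letters)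
    (h : φ.occurring b = φ.occurring a) : b = a := by
  have hmem : (⟨a, ha⟩ : φ.letters) ∈ φ.occurring b := h ▸ rfl
  exact hmem.symm

theorem definable_occurring_label {F : Type} [TreeLogic A F] (φ : MSO A) (x : ℕ)
    (c : Set φ.letters) : Definable F fun T v _ => φ.occurring (T.label (v x)) = c := by
  have : Finite φ.letters := φ.finite_letters
  refine (Definable.forall_finite fun b : φ.letters =>
    (Definable.lab b.1 x).iff (.const F (b ∈ c))).of_iff fun T v V => ?_
  simp only [Set.ext_iff, occurring, Set.mem_ofPred_eq]
  exact forall_congr' fun b => by rw [eq_comm]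

theorem exists_treeAutomaton {φ : MSO A} {L : Set (UTree A)} (hφ : φ.DefinesB L) :
    ∃ (Q : Type) (_ : Finite Q) (M : TreeAutomaton (Set φ.letters) Q),
      ∀ T, T ∈ L ↔ M.Accepts T (φ.occurring ∘ T.label) := by
  obtain ⟨R, ⟨Q, hQ, M, hM⟩, hR⟩ :=
    φ.automatonDefinable_sat fun a ha b => eq_of_occurring_eq (b := b) ha
  let N : TreeAutomaton (Set φ.letters) Q :=
    { start := M.start
      step := fun c => M.step ⟨c, ∅, ∅⟩
      accept := fun c => M.accept ⟨c, Set.univ, ∅⟩ }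
  refine ⟨Q, hQ, N, fun T => ?_⟩
  let ℓ := annotate φ.occurring T (fun _ => []) fun _ => ∅
  have hbelow : ∀ t ∈ T.forest [] 0, ℓ t = ⟨φ.occurring (T.label t), ∅, ∅⟩ := by
    intro t ht
    have hne : [] ≠ t := by rintro rfl; exact UTree.self_notMem_forest ht
    simp [ℓ, annotate, hne]
  have hroot : ℓ [] = ⟨φ.occurring (T.label []), Set.univ, ∅⟩ := by simp [ℓ, annotate]
  have hrun : M.run T ℓ [] 0 = N.run T (φ.occurring ∘ T.label) [] 0 :=
    TreeAutomaton.run_congr rfl fun t ht => congrArg M.step (hbelow t ht)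
  refine (hφ T _ _).trans ((hR T _ _ fun _ => T.nil_mem).trans ((hM T ℓ).trans ?_))
  rw [TreeAutomaton.Accepts, TreeAutomaton.Accepts, hroot, hrun]
  rfl

end MSO

/-! ### Sorting the children -/

theorem exists_perm_monotoneOn {α : Type*} [LinearOrder α] (f : ℕ → α) (n : ℕ) :
    ∃ σ : Equiv.Perm ℕ, (∀ i, σ i < n ↔ i < n) ∧ MonotoneOn (f ∘ σ) (Set.Iio n) := by
  let g (i : Fin n) : α := f i
  let σ : Equiv.Perm ℕ := (Tuple.sort g).extendDomain Fin.equivSubtype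
  have hσ (i : Fin n) : σ i = Tuple.sort g i :=
    (Tuple.sort g).extendDomain_apply_image Fin.equivSubtype i
  refine ⟨σ, fun i => ?_, fun i hi j hj hij => ?_⟩
  · by_cases hi : i < n
    · simp [hi, hσ ⟨i, hi⟩]
    · rw [(Tuple.sort g).extendDomain_apply_not_subtype Fin.equivSubtype hi]
  · have hmono : g (Tuple.sort g ⟨i, hi⟩) ≤ g (Tuple.sort g ⟨j, hj⟩) := Tuple.monotone_sort g hij
    simpa [g, ← hσ] using hmono

/-- The original names of the nodes after the children of every node `s` have been permuted by
`σ s`: below the node originally named `s`, the new `i`-th child is the old `σ s i`-th one. -/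
def reorder (σ : Node → Equiv.Perm ℕ) (t : Node) : Node :=
  t.foldl (fun s i => s ++ [σ s i]) []

section reorder

variable (σ : Node → Equiv.Perm ℕ)

theorem reorder_append_singleton (s : Node) (i : ℕ) :
    reorder σ (s ++ [i]) = reorder σ s ++ [σ (reorder σ s) i] := by
  simp [reorder]

theorem reorder_prefix {s t : Node} (h : s <+: t) : reorder σ s <+: reorder σ t := by
  obtain ⟨u, rfl⟩ := h
  induction u using List.reverseRecOn with
  | nil => simp
  | append_singleton u i ih =>
    rw [← List.append_assoc, reorder_append_singleton]
    exact ih.trans (List.prefix_append _ _)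

theorem reorder_injective : Function.Injective (reorder σ) := by
  intro s
  induction s using List.reverseRecOn with
  | nil =>
    intro t h
    induction t using List.reverseRecOn with
    | nil => rfl
    | append_singleton t j => simp [reorder] at h
  | append_singleton s i ih =>
    intro t h
    induction t using List.reverseRecOn with
    | nil => simp [reorder] at h
    | append_singleton t j =>
      rw [reorder_append_singleton, reorder_append_singleton, List.append_singleton_inj] at h
      obtain rfl := ih h.1
      rw [(σ (reorder σ s)).injective h.2]

theorem reorder_surjective : Function.Surjective (reorder σ) := by
  intro s
  induction s using List.reverseRecOn with
  | nil => exact ⟨[], rfl⟩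
  | append_singleton s i ih =>
    obtain ⟨t, rfl⟩ := ih
    exact ⟨t ++ [(σ (reorder σ t)).symm i], by simp [reorder_append_singleton]⟩

end reorder

namespace UTree

variable {A : Type} (T : UTree A) (σ : Node → Equiv.Perm ℕ)

/-- The tree in which the children of every node `s` of `T` are permuted by `σ s`. -/
noncomputable def reorder (hσ : ∀ s i, s ++ [σ s i] ∈ T.dom ↔ s ++ [i] ∈ T.dom) : UTree A where
  dom := T.dom.preimage (UnrankedTrees.reorder σ) (reorder_injective σ).injOn
  nil_mem := by simpa [UnrankedTrees.reorder] using T.nil_mem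
  prefix_closed s t hs hts := by
    rw [Finset.mem_preimage] at hs ⊢
    exact T.prefix_closed hs (reorder_prefix σ hts)
  sib_closed s i j hi hji := by
    rw [Finset.mem_preimage, reorder_append_singleton, hσ] at hi ⊢
    exact T.sib_closed hi hji
  label := T.label ∘ UnrankedTrees.reorder σ

variable {σ} in
theorem mem_reorder {hσ : ∀ s i, s ++ [σ s i] ∈ T.dom ↔ s ++ [i] ∈ T.dom} {s : Node} :
    s ∈ (T.reorder σ hσ).dom ↔ UnrankedTrees.reorder σ s ∈ T.dom := by
  rw [reorder, Finset.mem_preimage]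

theorem isUIso_reorder (hσ : ∀ s i, s ++ [σ s i] ∈ T.dom ↔ s ++ [i] ∈ T.dom) :
    IsUIso (UnrankedTrees.reorder σ) (T.reorder σ hσ) T where
  bijOn := by
    simp only [reorder, Finset.coe_preimage]
    refine ⟨Set.mapsTo_preimage _ _, (reorder_injective σ).injOn, fun t ht => ?_⟩
    obtain ⟨s, rfl⟩ := reorder_surjective σ t
    exact ⟨s, ht, rfl⟩
  label_eq _ _ := rfl
  childR_iff s hs t ht := by
    simp only [childR, hs, ht, T.mem_reorder.1 hs, T.mem_reorder.1 ht, true_and,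
      ← (reorder_injective σ).eq_iff (a := t), reorder_append_singleton]
    exact (σ (UnrankedTrees.reorder σ s)).surjective.exists
      (p := fun i => UnrankedTrees.reorder σ t = UnrankedTrees.reorder σ s ++ [i]) |>.symm

theorem exists_forall_append_singleton_mem_iff (s : Node) :
    ∃ n, ∀ i, s ++ [i] ∈ T.dom ↔ i < n := by
  classical
  have hinj : Function.Injective fun i : ℕ => s ++ [i] := fun i j h => by simpa using h
  have hex : ∃ i, s ++ [i] ∉ T.dom := by
    simpa using Infinite.exists_notMem_finset (T.dom.preimage _ hinj.injOn)
  refine ⟨Nat.find hex, fun i => ⟨fun hi => ?_, fun hi => not_not.1 (Nat.find_min hex hi)⟩⟩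
  by_contra! hle
  exact Nat.find_spec hex (mem_dom_of_append_singleton_prefix hi hle List.prefix_rfl)

theorem exists_isUIso_monotoneOn {α : Type*} [LinearOrder α] (K : Node → α) :
    ∃ (T' : UTree A) (f : Node → Node), IsUIso f T' T ∧
      ∀ s i j, i ≤ j → s ++ [j] ∈ T'.dom → K (f (s ++ [i])) ≤ K (f (s ++ [j])) := by
  choose n hn using T.exists_forall_append_singleton_mem_iff
  choose σ hσ hmono using fun s => exists_perm_monotoneOn (fun i => K (s ++ [i])) (n s)
  have hσT (s : Node) (i : ℕ) : s ++ [σ s i] ∈ T.dom ↔ s ++ [i] ∈ T.dom := by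
    rw [hn, hn, hσ]
  refine ⟨_, _, T.isUIso_reorder σ hσT, fun s i j hij hj => ?_⟩
  have hj' : j < n (UnrankedTrees.reorder σ s) := by
    simpa [mem_reorder, reorder_append_singleton, hσT, hn] using hj
  rw [reorder_append_singleton, reorder_append_singleton]
  exact hmono (UnrankedTrees.reorder σ s) (hij.trans_lt hj') hj' hij

end UTree

/-! ### Behaviours of subtrees -/

theorem IsUIso.map_nil {A : Type} {T T' : UTree A} {f : Node → Node}
    (h : IsUIso f T' T) : f [] = [] := by
  obtain ⟨t, ht, hft⟩ := h.bijOn.surjOn T.nil_mem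
  have hdesc : T.descR (f []) (f t) := h.descR_map ⟨T'.nil_mem, ht, List.nil_prefix⟩
  simpa [hft] using hdesc.2.2

namespace UTree

theorem forest_subset {A : Type} {T : UTree A} {p : Node} {i j : ℕ} (hij : i ≤ j) :
    T.forest p j ⊆ T.forest p i := fun t ht => by
  rw [mem_forest] at ht ⊢
  exact ⟨ht.1, ht.2.imp fun _ h => ⟨hij.trans h.1, h.2⟩⟩

variable {A κ : Type} {T T' : UTree A} {f : Node → Node} {K : Node → κ}

/-- The number of children of `s` of each color. -/
noncomputable def childCounts (T : UTree A) (K : Node → κ) (s : Node) (k : κ) : ℕ :=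
  {t | T.childR s t ∧ K t = k}.ncard

theorem childCounts_comp (h : IsUIso f T' T) {s : Node} (hs : s ∈ T'.dom) :
    T'.childCounts (K ∘ f) s = T.childCounts K (f s) := by
  funext k
  have himage : f '' {t | T'.childR s t ∧ K (f t) = k} = {t | T.childR (f s) t ∧ K t = k} := by
    ext t
    constructor
    · rintro ⟨t, ⟨hst, hk⟩, rfl⟩
      exact ⟨(h.childR_iff s hs t hst.2.1).1 hst, hk⟩
    · rintro ⟨hst, hk⟩
      obtain ⟨t, ht, rfl⟩ := h.bijOn.surjOn hst.2.1
      exact ⟨t, ⟨(h.childR_iff s hs t ht).2 hst, hk⟩, rfl⟩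
  rw [childCounts, childCounts, ← himage]
  exact (Set.InjOn.ncard_image (h.bijOn.injOn.mono fun t ht => ht.1.2.1)).symm

/-- The number of nodes of each color among the children `p ++ [j]` of `p` with `i ≤ j`. -/
noncomputable def siblingCounts (T : UTree A) (K : Node → κ) (p : Node) (i : ℕ) (k : κ) : ℕ :=
  {t | (t ∈ T.dom ∧ ∃ j, i ≤ j ∧ t = p ++ [j]) ∧ K t = k}.ncard

variable {p : Node} {i : ℕ}

theorem siblingCounts_zero (hp : p ∈ T.dom) : T.siblingCounts K p 0 = T.childCounts K p := by
  funext k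
  simp [siblingCounts, childCounts, childR, hp]

theorem siblingCounts_eq_zero {k : κ} (h : ∀ j, i ≤ j → p ++ [j] ∈ T.dom → K (p ++ [j]) ≠ k) :
    T.siblingCounts K p i k = 0 := by
  have hempty : {t | (t ∈ T.dom ∧ ∃ j, i ≤ j ∧ t = p ++ [j]) ∧ K t = k} = ∅ := by
    refine Set.eq_empty_of_forall_notMem ?_
    rintro _ ⟨⟨ht, j, hij, rfl⟩, hk⟩
    exact h j hij ht hk
  rw [siblingCounts, hempty, Set.ncard_empty]

theorem siblingCounts_of_mem [DecidableEq κ] (h : p ++ [i] ∈ T.dom) :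
    T.siblingCounts K p i = Function.update (T.siblingCounts K p (i + 1)) (K (p ++ [i]))
      (T.siblingCounts K p (i + 1) (K (p ++ [i])) + 1) := by
  have hmem (t : Node) : (t ∈ T.dom ∧ ∃ j, i ≤ j ∧ t = p ++ [j]) ↔
      t = p ++ [i] ∨ t ∈ T.dom ∧ ∃ j, i + 1 ≤ j ∧ t = p ++ [j] := by
    constructor
    · rintro ⟨ht, j, hij, rfl⟩
      obtain rfl | hlt := hij.eq_or_lt
      exacts [Or.inl rfl, Or.inr ⟨ht, j, hlt, rfl⟩]
    · rintro (rfl | ⟨ht, j, hij, rfl⟩)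
      exacts [⟨h, i, le_rfl, rfl⟩, ⟨ht, j, (Nat.le_succ i).trans hij, rfl⟩]
  funext k
  simp only [siblingCounts, hmem]
  obtain rfl | hk := eq_or_ne k (K (p ++ [i]))
  · rw [Function.update_self, ← Set.ncard_insert_of_notMem (a := p ++ [i]) (by simp)
      (T.dom.finite_toSet.subset fun t ht => ht.1.1)]
    congr 1
    grind
  · rw [Function.update_of_ne hk]
    congr 1
    grind

end UTree

section sortedState

variable {Q : Type*} {m : ℕ} (act : Fin m → Q → Q) (q : Q) (n : Fin m → ℕ)

/-- The state reached from `q` by applying each `act k` exactly `n k` times, largest `k` first. -/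
def sortedState : Q :=
  (List.finRange m).foldr (fun k => (act k)^[n k]) q

theorem sortedState_zero : sortedState act q (fun _ => 0) = q := by
  have hfold : ∀ ks : List (Fin m), ks.foldr (fun _ => id) q = q := fun ks => by
    induction ks <;> simp_all
  exact hfold _

theorem sortedState_update_succ {k : Fin m} (hn : ∀ l < k, n l = 0) :
    sortedState act q (Function.update n k (n k + 1)) = act k (sortedState act q n) := by
  suffices ∀ ks : List (Fin m), ks.Pairwise (· < ·) → k ∈ ks →
      ks.foldr (fun l => (act l)^[Function.update n k (n k + 1) l]) q =
        act k (ks.foldr (fun l => (act l)^[n l]) q) from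
    this _ (List.pairwise_lt_finRange m) (List.mem_finRange k)
  intro ks hks hk
  induction ks with
  | nil => simp at hk
  | cons l ks ih =>
    obtain ⟨hl, hks⟩ := List.pairwise_cons.1 hks
    obtain rfl | hk := List.mem_cons.1 hk
    · have hrest : ks.foldr (fun l => (act l)^[Function.update n k (n k + 1) l]) q =
          ks.foldr (fun l => (act l)^[n l]) q :=
        List.foldr_ext _ _ _ fun l hlks _ => by rw [Function.update_of_ne (hl l hlks).ne']
      simp [hrest, Function.iterate_succ_apply']
    · simp [(hl k hk).ne, hn l (hl k hk), ih hks hk]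

end sortedState

namespace TreeAutomaton

variable {A B Q : Type} {m : ℕ} (M : TreeAutomaton B Q) (act : Fin m → Q → Q)
  (T : UTree A) (ℓ : Node → B) (K : Node → Fin m)

/-- The state after reading the children of `s` sorted by color, when a subtree of color `k` acts on
the state of its right siblings by `act k`. -/
noncomputable def sortedRun (s : Node) : Q :=
  sortedState act M.start (T.childCounts K s)

/-- A coloring satisfying `IsBehaviour`, computed from the leaves upwards. -/
noncomputable def behaviour (hact : Function.Surjective act) (s : Node) : Fin m :=
  Function.surjInv hact <| M.step (ℓ s) <| sortedState act M.start
    fun k => {t | ∃ _h : T.childR s t, behaviour hact t = k}.ncard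
termination_by (T.forest s 0).card
decreasing_by
  obtain ⟨-, ht, i, rfl⟩ := _h
  exact (Finset.card_lt_card (UTree.forest_append_ssubset ht)).trans_le
    (Finset.card_le_card (UTree.forest_subset (Nat.zero_le i)))

/-- `K` colors every node by the way in which its subtree, with all siblings in it sorted by color,
acts on the states of `M`. -/
def IsBehaviour : Prop :=
  ∀ s ∈ T.dom, act (K s) = M.step (ℓ s) (M.sortedRun act T K s)

theorem isBehaviour_behaviour (hact : Function.Surjective act) :
    M.IsBehaviour act T ℓ (M.behaviour act T ℓ hact) := fun s _ => by
  rw [behaviour, Function.surjInv_eq hact]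
  simp only [exists_prop]
  rfl

variable {M act T ℓ K}

namespace IsBehaviour

theorem run_eq (hK : M.IsBehaviour act T ℓ K)
    (hsorted : ∀ s i j, i ≤ j → s ++ [j] ∈ T.dom → K (s ++ [i]) ≤ K (s ++ [j]))
    (p : Node) (i : ℕ) :
    M.run T ℓ p i = sortedState act M.start (T.siblingCounts K p i) := by
  induction p, i using T.forest_induction with
  | empty p i h =>
    have hcounts : T.siblingCounts K p i = fun _ => 0 := funext fun k =>
      UTree.siblingCounts_eq_zero fun j hij hj =>
        (h (UTree.mem_dom_of_append_singleton_prefix hj hij List.prefix_rfl)).elim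
    rw [run_of_notMem _ _ h, hcounts, sortedState_zero]
  | insert p i h ihc ihs =>
    have hact : act (K (p ++ [i])) = M.step (ℓ (p ++ [i])) (M.run T ℓ (p ++ [i]) 0) := by
      rw [ihc, UTree.siblingCounts_zero h]
      exact hK _ h
    rw [run_of_mem _ _ h, ← hact, ihs, UTree.siblingCounts_of_mem h, sortedState_update_succ]
    exact fun l hl => UTree.siblingCounts_eq_zero fun j hij hj =>
      (hl.trans_le (hsorted p i j ((Nat.le_succ i).trans hij) hj)).ne'

theorem comp (hK : M.IsBehaviour act T ℓ K) {T' : UTree A} {f : Node → Node} (h : IsUIso f T' T)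
    {ℓ' : Node → B} (hℓ : ∀ s ∈ T'.dom, ℓ (f s) = ℓ' s) : M.IsBehaviour act T' ℓ' (K ∘ f) := by
  intro s hs
  rw [sortedRun, UTree.childCounts_comp h hs, ← hℓ s hs]
  exact hK (f s) (h.bijOn.mapsTo hs)

end IsBehaviour

theorem mem_iff_exists_isBehaviour {L : Set (UTree A)}
    (hL : ∀ T T', UIso T T' → (T ∈ L ↔ T' ∈ L)) {π : A → B}
    (hM : ∀ T, T ∈ L ↔ M.Accepts T (π ∘ T.label)) (hact : Function.Surjective act) :
    T ∈ L ↔ ∃ K, M.IsBehaviour act T (π ∘ T.label) K ∧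
      M.accept (π (T.label [])) (M.sortedRun act T K []) := by
  have hmem {K : Node → Fin m} (hK : M.IsBehaviour act T (π ∘ T.label) K) :
      T ∈ L ↔ M.accept (π (T.label [])) (M.sortedRun act T K []) := by
    obtain ⟨T', f, hf, hsorted⟩ := T.exists_isUIso_monotoneOn K
    have hK' : M.IsBehaviour act T' (π ∘ T'.label) (K ∘ f) :=
      hK.comp hf fun s hs => congrArg π (hf.label_eq s hs)
    rw [← hL T' T (uIso_iff.2 ⟨f, hf⟩), hM, Accepts, hK'.run_eq hsorted,
      UTree.siblingCounts_zero T'.nil_mem, UTree.childCounts_comp hf T'.nil_mem,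
      Function.comp_apply, ← hf.label_eq [] T'.nil_mem, hf.map_nil, sortedRun]
  refine ⟨fun hT => ?_, fun ⟨K, hK, hacc⟩ => (hmem hK).2 hacc⟩
  have hK := M.isBehaviour_behaviour act T (π ∘ T.label) hact
  exact ⟨_, hK, (hmem hK).1 hT⟩

end TreeAutomaton

/-! ### Counting in `MSOmod` -/

/-- `MSOmod` can express that the cardinality of a set satisfies `R`. -/
def DefinableCount (A : Type) (R : ℕ → Prop) : Prop :=
  ∀ X : ℕ, Definable (MSOmod A) fun _ _ V => R (V X).ncard

namespace DefinableCount

variable {A : Type} {R : ℕ → Prop}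

theorem setOf {P : ValProp A} (hR : DefinableCount A R) (n X : ℕ) (hP : Definable (MSOmod A) P)
    (hX : ∀ T v V S, P T v (Function.update V X S) ↔ P T v V) :
    Definable (MSOmod A) fun T v V => R {s | s ∈ T.dom ∧ P T (Function.update v n s) V}.ncard := by
  refine (((hR X).and (((Definable.mem X n).iff hP).allFO n)).exSO X).of_iff fun T v V => ?_
  simp only [Function.update_self, hX]
  constructor
  · rintro ⟨S, hST, hRS, hS⟩
    have hS' : S = {s | s ∈ T.dom ∧ P T (Function.update v n s) V} :=
      Set.ext fun s => ⟨fun hs => ⟨hST hs, (hS s (hST hs)).1 hs⟩, fun hs => (hS s hs.1).2 hs.2⟩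
    rwa [← hS']
  · exact fun h => ⟨_, fun s hs => hs.1, h, fun s hs => and_iff_right hs⟩

theorem zero : DefinableCount A (· = 0) := fun X => by
  refine ((Definable.mem X 0).exFO 0).not.congr (X + 1) fun T v V hv => ?_
  have hX : V X ⊆ T.dom := hv.2 X X.lt_succ_self
  beta_reduce
  rw [Set.ncard_eq_zero (T.dom.finite_toSet.subset hX), Set.eq_empty_iff_forall_notMem]
  simpa using ⟨fun h s hs => h s (hX hs) hs, fun h s _ => h s⟩

theorem succ (hR : DefinableCount A R) : DefinableCount A fun n => ∃ k, n = k + 1 ∧ R k :=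
  fun X => by
  have hR' := hR.setOf 1 (X + 1) ((Definable.mem X 1).and (Definable.eq 1 0).not)
    fun _ v V S => by simp
  refine (((Definable.mem X 0).and hR').exFO 0).congr (X + 1) fun T v V hv => ?_
  have hX : V X ⊆ T.dom := hv.2 X X.lt_succ_self
  have hfin : (V X).Finite := T.dom.finite_toSet.subset hX
  have hdiff (x : Node) : {s | s ∈ T.dom ∧ s ∈ V X ∧ ¬ s = x} = V X \ {x} := by
    ext s
    exact ⟨fun h => h.2, fun h => ⟨hX h.1, h⟩⟩
  simp only [Function.update_self, ne_eq, zero_ne_one, not_false_eq_true, Function.update_of_ne,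
    hdiff]
  constructor
  · rintro ⟨x, -, hx, hRx⟩
    exact ⟨_, (Set.ncard_sdiff_singleton_add_one hx hfin).symm, hRx⟩
  · rintro ⟨k, hk, hRk⟩
    obtain ⟨x, hx⟩ := Set.nonempty_of_ncard_ne_zero (s := V X) (by omega)
    refine ⟨x, hX hx, hx, ?_⟩
    rwa [Set.ncard_sdiff_singleton_of_mem hx, hk, Nat.add_sub_cancel]

theorem add (hR : DefinableCount A R) (r : ℕ) :
    DefinableCount A fun n => ∃ k, n = k + r ∧ R k := by
  induction r with
  | zero => simpa using hR
  | succ r ih =>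
    refine fun X => (ih.succ X).of_iff fun _ _ V => ?_
    simp [← add_assoc]

theorem dvd {p : ℕ} (hp : 0 < p) : DefinableCount A (p ∣ ·) := fun X => by
  obtain rfl | hp1 := Nat.eq_or_lt_of_le hp
  · exact (Definable.const _ True).of_iff fun _ _ V => by simp
  · obtain ⟨k, rfl⟩ := Nat.exists_eq_add_of_le' hp1
    exact ⟨.modq k X, 0, fun _ _ _ _ => Nat.dvd_iff_mod_eq_zero⟩

theorem of_periodic {p : ℕ} (hp : 0 < p) (hR : Function.Periodic R p) : DefinableCount A R := by
  have hmod (r : Fin p) (n : ℕ) : (∃ k, n = k + r ∧ p ∣ k) ↔ n % p = r := by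
    refine ⟨?_, fun h => ⟨p * (n / p), by rw [← h, Nat.div_add_mod], dvd_mul_right p _⟩⟩
    rintro ⟨_, rfl, c, rfl⟩
    rw [Nat.mul_add_mod, Nat.mod_eq_of_lt r.2]
  refine fun X => (Definable.exists_finite fun r : Fin p =>
    ((dvd hp).add r X).and (.const _ (R r))).of_iff fun T v V => ?_
  simp only [hmod]
  rw [← hR.map_mod_nat]
  exact ⟨fun ⟨_, hr, hRr⟩ => hr ▸ hRr, fun h => ⟨⟨_, Nat.mod_lt _ hp⟩, rfl, h⟩⟩

theorem of_periodic_add {p : ℕ} (hp : 0 < p) (N : ℕ)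
    (hR : Function.Periodic (fun n => R (n + N)) p) : DefinableCount A R := by
  induction N generalizing R with
  | zero => exact of_periodic hp hR
  | succ N ih =>
    have hsucc : DefinableCount A fun n => R (n + 1) := ih hR
    refine fun X => (((zero X).and (.const _ (R 0))).or (hsucc.succ X)).of_iff fun _ _ V => ?_
    cases (V X).ncard <;> simp

end DefinableCount

theorem exists_periodic_iterate {Q : Type*} [Finite Q] (f : Q → Q) (q : Q) :
    ∃ p > 0, ∃ N, Function.Periodic (fun n => f^[n + N] q) p := by
  obtain ⟨i, j, hij, heq⟩ := Finite.exists_ne_map_eq_of_infinite fun n => f^[n] q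
  wlog hlt : i < j generalizing i j
  · exact this j i hij.symm heq.symm (hij.lt_or_gt.resolve_left hlt)
  refine ⟨j - i, Nat.sub_pos_of_lt hlt, i, fun n => ?_⟩
  beta_reduce
  rw [add_assoc, Nat.sub_add_cancel hlt.le, Function.iterate_add_apply, Function.iterate_add_apply,
    heq]

theorem definableCount_iterate (A : Type) {Q : Type*} [Finite Q] (f : Q → Q) (q q' : Q) :
    DefinableCount A fun n => f^[n] q = q' := by
  obtain ⟨p, hp, N, hN⟩ := exists_periodic_iterate f q
  exact .of_periodic_add hp N fun n => by simp only [hN n]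

namespace Definable

variable {A F : Type} [TreeLogic A F]

theorem bind {Q : Type*} [Finite Q] {g : UTree A → (ℕ → Node) → (ℕ → Set Node) → Q}
    (hg : ∀ q, Definable F fun T v V => g T v V = q) {P : Q → ValProp A}
    (hP : ∀ q, Definable F (P q)) : Definable F fun T v V => P (g T v V) T v V :=
  (exists_finite fun q => (hg q).and (hP q)).of_iff fun _ _ _ => by simp

theorem sortedState {Q : Type*} [Finite Q] {m : ℕ} {act : Fin m → Q → Q}
    {n : UTree A → (ℕ → Node) → (ℕ → Set Node) → Fin m → ℕ}
    (hn : ∀ k q q', Definable F fun T v V => (act k)^[n T v V k] q = q') (q q' : Q) :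
    Definable F fun T v V => sortedState act q (n T v V) = q' := by
  unfold UnrankedTrees.sortedState
  induction List.finRange m generalizing q' with
  | nil => exact const F (q = q')
  | cons k ks ih => exact bind ih fun q'' => hn k q'' q'

end Definable

theorem UTree.childR_iff_descR {A : Type} {T : UTree A} {s t : Node} :
    T.childR s t ↔ T.descR s t ∧ s ≠ t ∧
      ∀ u ∈ T.dom, T.descR s u → T.descR u t → u = s ∨ u = t := by
  constructor
  · rintro ⟨hs, ht, i, rfl⟩
    refine ⟨⟨hs, ht, List.prefix_append _ _⟩, by simp, ?_⟩
    rintro u - ⟨-, -, hsu⟩ ⟨-, -, hut⟩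
    obtain rfl | hus := List.prefix_concat_iff.1 hut
    exacts [Or.inr rfl, Or.inl (hus.eq_of_length_le hsu.length_le)]
  · rintro ⟨⟨hs, ht, hst⟩, hne, hmin⟩
    obtain rfl | ⟨i, hi⟩ := prefix_iff_eq_or_exists_append_singleton.1 hst
    · exact (hne rfl).elim
    · have hmem := T.prefix_closed ht hi
      have hcases := hmin _ hmem ⟨hs, hmem, List.prefix_append _ _⟩ ⟨hmem, ht, hi⟩
      exact ⟨hs, ht, i, by simpa [eq_comm] using hcases⟩

namespace Definable

variable {A F : Type} [TreeLogic A F]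

theorem childR (x y : ℕ) : Definable F fun (T : UTree A) v _ => T.childR (v x) (v y) := by
  have hmin := ((desc (F := F) x (x + y + 1)).imp ((desc (x + y + 1) y).imp
    ((eq (x + y + 1) x).or (eq (x + y + 1) y)))).allFO (x + y + 1)
  refine ((desc x y).and ((eq x y).not.and hmin)).of_iff fun T v _ => ?_
  have hx : x ≠ x + y + 1 := by omega
  have hy : y ≠ x + y + 1 := by omega
  simp [UTree.childR_iff_descR, hx, hy]

theorem eq_nil (x : ℕ) : Definable F fun (_ : UTree A) v _ => v x = [] := by
  refine ((desc x (x + 1)).allFO (x + 1)).congr (x + 1) fun T v V hv => ?_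
  simp only [Function.update_self, ne_eq, Nat.ne_add_one, not_false_eq_true, Function.update_of_ne,
    UTree.descR]
  refine ⟨fun h => ?_, fun h s hs => ⟨hv.1 x x.lt_succ_self, hs, h ▸ List.nil_prefix⟩⟩
  exact List.prefix_nil.1 (h [] T.nil_mem).2.2

end Definable

/-! ### From automata to `MSOmod` -/

theorem definable_sortedState_childR {A Q : Type} [Finite Q] {m : ℕ} (act : Fin m → Q → Q)
    (x : ℕ) (q q' : Q) : Definable (MSOmod A) fun T v V =>
      sortedState act q (fun k : Fin m => {t | T.childR (v x) t ∧ t ∈ V k}.ncard) = q' := by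
  refine Definable.sortedState (fun k q q' => ?_) q q'
  have hcount := (definableCount_iterate A (act k) q q').setOf (x + 1) m
    ((Definable.childR x (x + 1)).and (.mem k (x + 1))) fun T v V S => by simp [k.2.ne]
  refine hcount.of_iff fun T v V => ?_
  have hmem (t : Node) : t ∈ T.dom ∧ T.childR (v x) t ∧ t ∈ V k ↔ T.childR (v x) t ∧ t ∈ V k :=
    and_iff_right_of_imp fun h => h.1.2.1
  simp [hmem]

theorem TreeAutomaton.definable_exists_isBehaviour {A B Q : Type} [Finite B] [Finite Q]
    (M : TreeAutomaton B Q) {m : ℕ} (act : Fin m → Q → Q) {π : A → B}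
    (hπ : ∀ x b, Definable (MSOmod A) fun T v _ => π (T.label (v x)) = b) :
    Definable (MSOmod A) fun T _ _ => ∃ K, M.IsBehaviour act T (π ∘ T.label) K ∧
      M.accept (π (T.label [])) (M.sortedRun act T K []) := by
  have hstate := definable_sortedState_childR (A := A) act 0 M.start
  have hstep := (Definable.forall_finite fun k : Fin m => (Definable.mem k 0).imp <|
    .bind (hπ 0) fun b => .bind hstate fun q => .const _ (act k = M.step b q)).allFO 0
  have haccept := ((Definable.eq_nil 0).and <|
    .bind (hπ 0) fun b => .bind hstate fun q => .const _ (M.accept b q)).exFO 0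
  refine ((hstep.and haccept).exists_coloring Fin.valEmbedding).of_iff fun T v V =>
    exists_congr fun K => ?_
  have hcolor (k : Fin m) : Function.extend Fin.valEmbedding
      (fun k => {x | x ∈ T.dom ∧ K x = k}) V k = {x | x ∈ T.dom ∧ K x = k} :=
    Fin.valEmbedding.injective.extend_apply _ _ k
  have hrun (s : Node) : sortedState act M.start
      (fun k => {t | T.childR s t ∧ t ∈ T.dom ∧ K t = k}.ncard) = M.sortedRun act T K s := by
    have hmem (k : Fin m) (t : Node) :
        T.childR s t ∧ t ∈ T.dom ∧ K t = k ↔ T.childR s t ∧ K t = k :=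
      and_congr_right fun h => and_iff_right h.2.1
    simp only [hmem]
    rfl
  simp only [hcolor, Function.update_self, Set.mem_ofPred_eq, hrun]
  refine and_congr ⟨fun h s hs => ?_, ?_⟩ ?_
  · exact h s hs _ ⟨hs, rfl⟩
  · rintro h s hs _ ⟨-, rfl⟩
    exact h s hs
  · simp [T.nil_mem]

theorem exists_msomod_of_nsInvariant {A : Type} {L : Set (UTree A)} {φ : MSO A}
    (hinv : NsInvariant φ) (hφ : φ.DefinesB L) : ∃ ψ : MSOmod A, ψ.DefinesB L := by
  have : Finite φ.letters := φ.finite_letters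
  obtain ⟨Q, _, M, hM⟩ := φ.exists_treeAutomaton hφ
  obtain ⟨m, ⟨e⟩⟩ := Finite.exists_equiv_fin (Q → Q)
  have hL (T T' : UTree A) (h : UIso T T') : T ∈ L ↔ T' ∈ L := by
    let v (_ : ℕ) : Node := []
    let V (_ : ℕ) : Set Node := ∅
    rw [hφ T v V, hφ T' v V, hinv T T' h v v V V]
  have hdef := M.definable_exists_isBehaviour e.symm φ.definable_occurring_label
  exact (hdef.of_iff fun T _ _ =>
    (TreeAutomaton.mem_iff_exists_isBehaviour hL hM e.symm.surjective).symm).exists_sentence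

theorem invariant_mso_iff_msomod_general (A : Type) (L : Set (UTree A)) :
    (∃ φ : MSO A, NsInvariant φ ∧ φ.DefinesB L) ↔ ∃ ψ : MSOmod A, ψ.DefinesB L :=
  ⟨fun ⟨_, hinv, hφ⟩ => exists_msomod_of_nsInvariant hinv hφ,
    fun ⟨_, hψ⟩ => exists_invariant_mso_of_msomod hψ⟩

/-- Over unordered unranked Σ-trees, the `≺_ns`-invariant
Boolean queries (defined by order-invariant MSO sentences over ordered trees)
are precisely the Boolean queries definable in MSO_mod. -/
theorem invariant_mso_iff_msomod (A : Type) [Fintype A] (L : Set (UTree A)) :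
    (∃ φ : MSO A, NsInvariant φ ∧ φ.DefinesB L) ↔
      ∃ ψ : MSOmod A, ψ.DefinesB L :=
  invariant_mso_iff_msomod_general A L

end UnrankedTrees
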